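/- arXiv:2304.04010 — 2 statements merged into one kernel-verified Lean document; each statement's English description precedes it below -/
import Mathlib

section
/- Fix d ≥ 1, an input x ∈ ℝ^d, and σ_w, σ_b > 0. Let F = n^{-1/2} · σ_w · Σ_{j=1}^n w_j τ(σ_w⟨w_j^{(0)}, x⟩ + σ_b b_j^{(0)}) + σ_b b, where the w_j, the coordinates w_{j,i}^{(0)} of the vectors w_j^{(0)} ∈ ℝ^d, the b_j^{(0)}, and b are all i.i.d. standard Gaussian random variables, and τ ∈ C²(ℝ) satisfies |τ(x)| ≤ a + b|x|^γ, |τ'(x)| ≤ a + b|x|^γ and |τ''(x)| ≤ a + b|x|^γ for all x ∈ ℝ, for some constants a, b, γ ≥ 0. Set Γ = (σ_w²‖x‖² + σ_b²)^{1/2} and σ² = σ_w² · E[τ²(ΓZ)] + σ_b² with Z ~ N(0,1), and let N ~ N(0, σ²). Then for every n ≥ 1, d_{KS}(F, N) ≤ (1/√n) · (2/σ²) · σ_w² · √(Γ² + Γ⁴·(2 + √(3(1 + 2Γ² + 3Γ⁴)))) · ‖a + b|ΓZ|^γ‖_{L⁴}², where ‖X‖_{L⁴} = (E[X⁴])^{1/4}.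 -/
open MeasureTheory ProbabilityTheory Real

/-- The Kolmogorov–Smirnov distance between two distributions on `ℝ`:
`sup_z |P(X ≤ z) − P(Y ≤ z)|`. -/
noncomputable def dKS (μ ν : Measure ℝ) : ℝ :=
  ⨆ z : ℝ, |(μ (Set.Iic z)).toReal - (ν (Set.Iic z)).toReal|

/-!
Given the hidden layer, the output is a centred Gaussian whose variance `S` is an affine function
of the empirical mean of `τ²` over the `n` i.i.d. preactivations, and `E S = σ²`. So the distance
to `N(0, σ²)` is at most the mean of the distance between `N(0, S)` and `N(0, σ²)`, which is at
most `(3/4) |S - σ²| / σ²`. The fluctuation `E |S - σ²|` is at most `σ_w² √(Var τ² / n)`, and the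
Gaussian Poincaré inequality bounds `Var τ²` by a multiple of `Γ² E (2 τ τ')²`. Its constant
`π²/8`, obtained from Pisier's rotation argument, is not the optimal `1`, but it leaves
`(3/4)(π/√2) < 2`.
-/

open Set
open scoped ENNReal NNReal

/-! ### Kolmogorov–Smirnov distance between centred Gaussians -/

lemma abs_measureReal_Iic_sub_le_dKS (μ ν : Measure ℝ) [IsProbabilityMeasure μ]
    [IsProbabilityMeasure ν] (z : ℝ) : |μ.real (Iic z) - ν.real (Iic z)| ≤ dKS μ ν := by
  refine le_ciSup (f := fun z => |μ.real (Iic z) - ν.real (Iic z)|) ⟨1, ?_⟩ z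
  rintro _ ⟨y, rfl⟩
  exact abs_sub_le_of_nonneg_of_le measureReal_nonneg measureReal_le_one measureReal_nonneg
    measureReal_le_one

lemma dKS_map_prod_le_integral {α β : Type*} [MeasurableSpace α] [MeasurableSpace β]
    {μ : Measure α} {ρ : Measure β} {ν : Measure ℝ} [IsProbabilityMeasure μ]
    [IsProbabilityMeasure ρ] [IsProbabilityMeasure ν] {G : α × β → ℝ} (hG : Measurable G)
    {C : α → ℝ} (hC : Integrable C μ) (hle : ∀ a, dKS (ρ.map fun b => G (a, b)) ν ≤ C a) :
    dKS ((μ.prod ρ).map G) ν ≤ ∫ a, C a ∂μ := by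
  refine ciSup_le fun z => ?_
  have hG_fiber (a : α) : Measurable fun b => G (a, b) := hG.comp measurable_prodMk_left
  have (a : α) : IsProbabilityMeasure (ρ.map fun b => G (a, b)) :=
    Measure.isProbabilityMeasure_map (hG_fiber a).aemeasurable
  have h_fiber (a : α) :
      (ρ.map fun b => G (a, b)) (Iic z) = ρ (Prod.mk a ⁻¹' (G ⁻¹' Iic z)) :=
    Measure.map_apply (hG_fiber a) measurableSet_Iic
  have h_meas : Measurable fun a => (ρ.map fun b => G (a, b)) (Iic z) := by
    simpa only [h_fiber] using measurable_measure_prodMk_left (hG measurableSet_Iic)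
  have h_int : Integrable (fun a => (ρ.map fun b => G (a, b)).real (Iic z)) μ :=
    .of_bound h_meas.ennreal_toReal.aestronglyMeasurable 1
      (.of_forall fun a => by
        rw [norm_of_nonneg measureReal_nonneg]; exact measureReal_le_one)
  have h_mix : ((μ.prod ρ).map G).real (Iic z) =
      ∫ a, (ρ.map fun b => G (a, b)).real (Iic z) ∂μ := by
    simp only [Measure.real]
    rw [integral_toReal h_meas.aemeasurable (.of_forall fun a => measure_lt_top _ _),
      Measure.map_apply hG measurableSet_Iic, Measure.prod_apply (hG measurableSet_Iic)]
    simp only [h_fiber]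
  calc |((μ.prod ρ).map G).real (Iic z) - ν.real (Iic z)|
      = |∫ a, ((ρ.map fun b => G (a, b)).real (Iic z) - ν.real (Iic z)) ∂μ| := by
        rw [integral_sub h_int (integrable_const _), h_mix]; simp
    _ ≤ ∫ a, |(ρ.map fun b => G (a, b)).real (Iic z) - ν.real (Iic z)| ∂μ :=
        abs_integral_le_integral_abs
    _ ≤ ∫ a, C a ∂μ := integral_mono (h_int.sub (integrable_const _)).abs hC fun a =>
        (abs_measureReal_Iic_sub_le_dKS _ ν z).trans (hle a)

lemma measureReal_Ici_neg (μ : Measure ℝ) [μ.IsNegInvariant] (z : ℝ) :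
    μ.real (Ici (-z)) = μ.real (Iic z) := by
  rw [Measure.real, Measure.real, ← Measure.measure_preimage_neg]
  simp

section IsNegInvariant

variable (μ ν : Measure ℝ) [IsProbabilityMeasure μ] [IsProbabilityMeasure ν]
  [μ.IsNegInvariant] [ν.IsNegInvariant]

lemma one_half_le_measureReal_Iic {z : ℝ} (hz : 0 ≤ z) : 1 / 2 ≤ μ.real (Iic z) := by
  have h_cover : Iic z ∪ Ici (-z) = univ := Iic_union_Ici_of_le (by linarith)
  have h_union := measureReal_union_le (μ := μ) (Iic z) (Ici (-z))
  rw [h_cover, probReal_univ, measureReal_Ici_neg] at h_union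
  linarith

lemma measureReal_Iic_le_one_half {z : ℝ} (hz : z < 0) : μ.real (Iic z) ≤ 1 / 2 := by
  have h_disj : Disjoint (Iic z) (Ici (-z)) := Iic_disjoint_Ici.2 (by linarith)
  have h_union := measureReal_union (μ := μ) h_disj measurableSet_Ici
  rw [measureReal_Ici_neg] at h_union
  linarith [measureReal_le_one (μ := μ) (s := Iic z ∪ Ici (-z))]

lemma dKS_le_one_half : dKS μ ν ≤ 1 / 2 := by
  refine ciSup_le fun z => ?_
  change |μ.real (Iic z) - ν.real (Iic z)| ≤ 1 / 2
  rw [abs_le]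
  rcases lt_or_ge z 0 with hz | hz
  · have := measureReal_Iic_le_one_half μ hz
    have := measureReal_Iic_le_one_half ν hz
    constructor <;> linarith [measureReal_nonneg (μ := μ) (s := Iic z),
      measureReal_nonneg (μ := ν) (s := Iic z)]
  · have := one_half_le_measureReal_Iic μ hz
    have := one_half_le_measureReal_Iic ν hz
    constructor <;> linarith [measureReal_le_one (μ := μ) (s := Iic z),
      measureReal_le_one (μ := ν) (s := Iic z)]

end IsNegInvariant

instance isNegInvariant_gaussianReal_zero (v : ℝ≥0) : (gaussianReal 0 v).IsNegInvariant where
  neg_eq_self := by simpa [Measure.neg] using gaussianReal_map_neg (μ := 0) (v := v)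

lemma hasDerivAt_cdf_gaussianReal (m : ℝ) {v : ℝ≥0} (hv : v ≠ 0) (x : ℝ) :
    HasDerivAt (cdf (gaussianReal m v)) (gaussianPDFReal m v x) x := by
  have h_int := integrable_gaussianPDFReal m v
  have h_cont : Continuous (gaussianPDFReal m v) := by
    unfold gaussianPDFReal; fun_prop
  have h_cdf (y : ℝ) : cdf (gaussianReal m v) y = ∫ t in Iic y, gaussianPDFReal m v t := by
    rw [cdf_eq_real, Measure.real, gaussianReal_apply_eq_integral m hv, ENNReal.toReal_ofReal]
    exact integral_nonneg fun t => gaussianPDFReal_nonneg m v t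
  have h_eq : ⇑(cdf (gaussianReal m v)) =
      fun y => cdf (gaussianReal m v) x + ∫ t in x..y, gaussianPDFReal m v t := by
    ext y
    rw [← intervalIntegral.integral_Iic_sub_Iic h_int.integrableOn h_int.integrableOn, h_cdf,
      h_cdf, add_sub_cancel]
  rw [h_eq]
  exact (h_cont.integral_hasStrictDerivAt x x).hasDerivAt.const_add _

lemma abs_mul_gaussianPDFReal_le (t : ℝ) : |t * gaussianPDFReal 0 1 t| ≤ 1 / 2 := by
  have h_sqrt : 2 ≤ √(2 * π) := le_sqrt_of_sq_le (by linarith [pi_gt_three])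
  have h_exp : |t| ≤ rexp (t ^ 2 / 2) := by
    nlinarith [add_one_le_exp (t ^ 2 / 2), sq_nonneg (|t| - 1), sq_abs t]
  have h_pdf : gaussianPDFReal 0 1 t = (√(2 * π))⁻¹ * (rexp (t ^ 2 / 2))⁻¹ := by
    simp [gaussianPDFReal, ← exp_neg, neg_div]
  calc |t * gaussianPDFReal 0 1 t|
      = (√(2 * π))⁻¹ * (|t| / rexp (t ^ 2 / 2)) := by
        rw [abs_mul, abs_of_nonneg (gaussianPDFReal_nonneg 0 1 t), h_pdf]; ring
    _ ≤ 2⁻¹ * 1 := by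
        gcongr
        exact div_le_one_of_le₀ h_exp (exp_pos _).le
    _ = 1 / 2 := by norm_num

lemma abs_cdf_mul_exp_sub_le (z θ η : ℝ) :
    |cdf (gaussianReal 0 1) (z * rexp (-θ)) - cdf (gaussianReal 0 1) (z * rexp (-η))|
      ≤ 1 / 2 * |θ - η| := by
  have h_deriv (θ : ℝ) : HasDerivAt (fun θ => cdf (gaussianReal 0 1) (z * rexp (-θ)))
      (-(z * rexp (-θ) * gaussianPDFReal 0 1 (z * rexp (-θ)))) θ :=
    ((hasDerivAt_cdf_gaussianReal 0 one_ne_zero (z * rexp (-θ))).comp θ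
      ((hasDerivAt_neg θ).exp.const_mul z)).congr_deriv (by ring)
  have := convex_univ.norm_image_sub_le_of_norm_hasDerivWithin_le (C := 1 / 2)
    (fun θ _ => (h_deriv θ).hasDerivWithinAt)
    (fun θ _ => by simpa using abs_mul_gaussianPDFReal_le (z * rexp (-θ)))
    (mem_univ η) (mem_univ θ)
  simpa using this

lemma measurePreserving_const_mul_gaussianReal (c : ℝ) :
    MeasurePreserving (c * ·) (gaussianReal 0 1) (gaussianReal 0 (c ^ 2).toNNReal) := by
  refine ⟨by fun_prop, ?_⟩
  rw [gaussianReal_map_const_mul, toNNReal_of_nonneg (sq_nonneg c)]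
  simp

lemma measureReal_Iic_gaussianReal_zero {v : ℝ≥0} (hv : v ≠ 0) (z : ℝ) :
    (gaussianReal 0 v).real (Iic z) = cdf (gaussianReal 0 1) (z * rexp (-(log v / 2))) := by
  have h_sq : rexp (log v / 2) ^ 2 = v := by
    rw [← exp_nat_mul, Nat.cast_ofNat, mul_div_cancel₀ _ two_ne_zero,
      exp_log (NNReal.coe_pos.2 (pos_iff_ne_zero.2 hv))]
  have h_map := measurePreserving_const_mul_gaussianReal (rexp (log v / 2))
  rw [h_sq, toNNReal_coe] at h_map
  rw [← h_map.map_eq, map_measureReal_apply h_map.measurable measurableSet_Iic, cdf_eq_real,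
    exp_neg, ← div_eq_mul_inv]
  congr 1
  ext y
  simp [le_div_iff₀' (exp_pos _)]

lemma dKS_gaussianReal_le_abs_log_sub {u v : ℝ≥0} (hu : u ≠ 0) (hv : v ≠ 0) :
    dKS (gaussianReal 0 u) (gaussianReal 0 v) ≤ 1 / 4 * |log u - log v| := by
  refine ciSup_le fun z => ?_
  change |(gaussianReal 0 u).real (Iic z) - (gaussianReal 0 v).real (Iic z)| ≤ _
  rw [measureReal_Iic_gaussianReal_zero hu, measureReal_Iic_gaussianReal_zero hv]
  refine (abs_cdf_mul_exp_sub_le z _ _).trans_eq ?_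
  rw [← sub_div, abs_div, abs_two]
  ring

lemma abs_log_sub_log_le {u v c : ℝ} (hc : 0 < c) (hu : c ≤ u) (hv : c ≤ v) :
    |log u - log v| ≤ |u - v| / c := by
  have h := (convex_Ici c).norm_image_sub_le_of_norm_hasDerivWithin_le (f := log) (f' := (·⁻¹))
    (C := c⁻¹)
    (fun t ht => (hasDerivAt_log (hc.trans_le ht).ne').hasDerivWithinAt)
    (fun t ht => by
      rw [norm_inv, norm_of_nonneg (hc.le.trans ht)]
      exact inv_anti₀ hc ht) hv hu
  simpa [div_eq_inv_mul] using h

-- For `u ≤ v / 3` the bound by `1 / 2` suffices; beyond, `log` is Lipschitz with constant `3 / v`.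
theorem dKS_gaussianReal_le (u : ℝ≥0) {v : ℝ≥0} (hv : v ≠ 0) :
    dKS (gaussianReal 0 u) (gaussianReal 0 v) ≤ 3 / 4 * (|(u : ℝ) - v| / v) := by
  have hv_pos : (0 : ℝ) < v := NNReal.coe_pos.2 (pos_iff_ne_zero.2 hv)
  rcases le_total (u : ℝ) (v / 3) with h_small | h_large
  · calc dKS (gaussianReal 0 u) (gaussianReal 0 v)
        ≤ 1 / 2 := dKS_le_one_half _ _
      _ ≤ 3 / 4 * (|(u : ℝ) - v| / v) := by
        have : 2 / 3 ≤ |(u : ℝ) - v| / v := by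
          rw [le_div_iff₀ hv_pos, abs_sub_comm]
          exact le_abs.2 (.inl (by linarith))
        linarith
  · have hu : u ≠ 0 := by
      rintro rfl
      rw [NNReal.coe_zero] at h_large
      linarith
    calc dKS (gaussianReal 0 u) (gaussianReal 0 v)
        ≤ 1 / 4 * |log u - log v| := dKS_gaussianReal_le_abs_log_sub hu hv
      _ ≤ 1 / 4 * (|(u : ℝ) - v| / (v / 3)) := by
        gcongr
        exact abs_log_sub_log_le (by positivity) h_large (by linarith)
      _ = 3 / 4 * (|(u : ℝ) - v| / v) := by field_simp

/-! ### The Gaussian Poincaré inequality -/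

lemma sq_integral_le {α : Type*} [MeasurableSpace α] {μ : Measure α} [IsFiniteMeasure μ]
    {f : α → ℝ} (hf : MemLp f 2 μ) :
    (∫ a, f a ∂μ) ^ 2 ≤ μ.real univ * ∫ a, f a ^ 2 ∂μ := by
  rcases eq_zero_or_neZero μ with rfl | hμ
  · simp
  have h_mass : 0 < μ.real univ := measureReal_univ_pos
  have h_jensen := (even_two.convexOn_pow (𝕜 := ℝ)).map_average_le (by fun_prop) isClosed_univ
    (.of_forall fun _ => mem_univ _) (hf.integrable one_le_two) hf.integrable_sq
  rw [average_eq, average_eq, smul_eq_mul, smul_eq_mul, mul_pow] at h_jensen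
  field_simp at h_jensen
  exact h_jensen

section Rotation

variable {f : ℝ → ℝ} (hf : ContDiff ℝ 1 f)
include hf

lemma integral_deriv_rotation (x y : ℝ) :
    ∫ t in (0 : ℝ)..π / 2, deriv f (cos t * x + sin t * y) * (-sin t * x + cos t * y) =
      f y - f x := by
  have h_path (t : ℝ) : HasDerivAt (fun t => f (cos t * x + sin t * y))
      (deriv f (cos t * x + sin t * y) * (-sin t * x + cos t * y)) t :=
    (hf.differentiable one_ne_zero _).hasDerivAt.comp t
      (((hasDerivAt_cos t).mul_const x).add ((hasDerivAt_sin t).mul_const y))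
  have : Continuous (deriv f) := hf.continuous_deriv le_rfl
  rw [intervalIntegral.integral_eq_sub_of_hasDerivAt (fun t _ => h_path t)
    (Continuous.intervalIntegrable (by fun_prop) _ _)]
  simp

lemma ofReal_sq_sub_le_lintegral_rotation (x y : ℝ) :
    ENNReal.ofReal ((f y - f x) ^ 2) ≤ ENNReal.ofReal (π / 2) * ∫⁻ t in Ioc 0 (π / 2),
      ENNReal.ofReal ((deriv f (cos t * x + sin t * y) * (-sin t * x + cos t * y)) ^ 2) := by
  have : Continuous (deriv f) := hf.continuous_deriv le_rfl
  set h : ℝ → ℝ := fun t => deriv f (cos t * x + sin t * y) * (-sin t * x + cos t * y)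
  have h_cont : Continuous h := by fun_prop
  have h_memLp : MemLp h 2 (volume.restrict (Ioc 0 (π / 2))) :=
    (memLp_two_iff_integrable_sq h_cont.aestronglyMeasurable.restrict).2
      (h_cont.pow 2).integrableOn_Ioc
  have h_sq := sq_integral_le h_memLp
  rw [← intervalIntegral.integral_of_le (by positivity), integral_deriv_rotation hf] at h_sq
  rw [← ofReal_integral_eq_lintegral_ofReal h_memLp.integrable_sq (.of_forall fun t => sq_nonneg _),
    ← ENNReal.ofReal_mul (by positivity)]
  exact ENNReal.ofReal_le_ofReal (by simpa [pi_pos.le, max_eq_left (pi_div_two_pos.le)] using h_sq)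

end Rotation

lemma lintegral_sq_gaussianReal_zero (v : ℝ≥0) :
    ∫⁻ z, ENNReal.ofReal (z ^ 2) ∂gaussianReal 0 v = v := by
  have h_memLp : MemLp (fun z => z) 2 (gaussianReal 0 v) := memLp_id_gaussianReal 2
  have h_var := variance_of_integral_eq_zero h_memLp.aemeasurable
    (integral_id_gaussianReal (μ := 0) (v := v))
  rw [variance_fun_id_gaussianReal] at h_var
  rw [← ofReal_integral_eq_lintegral_ofReal h_memLp.integrable_sq (.of_forall fun _ => sq_nonneg _),
    ← ENNReal.ofReal_coe_nnreal, h_var]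

-- The point `(x, y)` rotated by `t` and its derivative in `t` are again independent `N(0, v)`.
lemma lintegral_sq_mul_rotation_gaussianReal (v : ℝ≥0) {g : ℝ → ℝ} (hg : Measurable g) (t : ℝ) :
    ∫⁻ p : ℝ × ℝ, ENNReal.ofReal
        ((g (cos t * p.1 + sin t * p.2) * (-sin t * p.1 + cos t * p.2)) ^ 2)
        ∂(gaussianReal 0 v).prod (gaussianReal 0 v) =
      v * ∫⁻ z, ENNReal.ofReal (g z ^ 2) ∂gaussianReal 0 v := by
  have h_rot : MeasurePreserving (ContinuousLinearMap.rotation (E := ℝ) t)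
      ((gaussianReal 0 v).prod (gaussianReal 0 v)) ((gaussianReal 0 v).prod (gaussianReal 0 v)) :=
    ⟨(ContinuousLinearMap.rotation t).continuous.measurable,
      IsGaussian.map_rotation_eq_self (by simp) t⟩
  calc _ = ∫⁻ p : ℝ × ℝ, ENNReal.ofReal (g p.1 ^ 2) * ENNReal.ofReal (p.2 ^ 2)
        ∂(gaussianReal 0 v).prod (gaussianReal 0 v) := by
        rw [← h_rot.lintegral_comp
          (f := fun p => ENNReal.ofReal (g p.1 ^ 2) * ENNReal.ofReal (p.2 ^ 2)) (by fun_prop)]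
        simp [ContinuousLinearMap.rotation_apply, ← ENNReal.ofReal_mul, sq_nonneg, mul_pow]
    _ = (∫⁻ z, ENNReal.ofReal (g z ^ 2) ∂gaussianReal 0 v) *
        ∫⁻ z, ENNReal.ofReal (z ^ 2) ∂gaussianReal 0 v :=
      lintegral_prod_mul (f := fun z => ENNReal.ofReal (g z ^ 2))
        (g := fun z => ENNReal.ofReal (z ^ 2)) (by fun_prop) (by fun_prop)
    _ = _ := by rw [lintegral_sq_gaussianReal_zero, mul_comm]

lemma lintegral_sq_sub_gaussianReal_le (v : ℝ≥0) {f : ℝ → ℝ} (hf : ContDiff ℝ 1 f) :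
    ∫⁻ p : ℝ × ℝ, ENNReal.ofReal ((f p.2 - f p.1) ^ 2)
        ∂(gaussianReal 0 v).prod (gaussianReal 0 v) ≤
      ENNReal.ofReal ((π / 2) ^ 2 * v) *
        ∫⁻ z, ENNReal.ofReal (deriv f z ^ 2) ∂gaussianReal 0 v := by
  have h_deriv : Continuous (deriv f) := hf.continuous_deriv le_rfl
  have h_joint : Continuous fun q : (ℝ × ℝ) × ℝ => ENNReal.ofReal
      ((deriv f (cos q.2 * q.1.1 + sin q.2 * q.1.2) * (-sin q.2 * q.1.1 + cos q.2 * q.1.2)) ^ 2) :=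
    ENNReal.continuous_ofReal.comp (by fun_prop)
  calc _ ≤ ∫⁻ p : ℝ × ℝ, ENNReal.ofReal (π / 2) * (∫⁻ t in Ioc 0 (π / 2), ENNReal.ofReal
        ((deriv f (cos t * p.1 + sin t * p.2) * (-sin t * p.1 + cos t * p.2)) ^ 2))
        ∂(gaussianReal 0 v).prod (gaussianReal 0 v) :=
        lintegral_mono fun p => ofReal_sq_sub_le_lintegral_rotation hf p.1 p.2
    _ = ENNReal.ofReal (π / 2) * ∫⁻ _ in Ioc 0 (π / 2),
        v * ∫⁻ z, ENNReal.ofReal (deriv f z ^ 2) ∂gaussianReal 0 v := by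
        rw [lintegral_const_mul' _ _ ENNReal.ofReal_ne_top,
          lintegral_lintegral_swap h_joint.aemeasurable]
        simp only [lintegral_sq_mul_rotation_gaussianReal v h_deriv.measurable]
    _ = ENNReal.ofReal ((π / 2) ^ 2 * v) *
        ∫⁻ z, ENNReal.ofReal (deriv f z ^ 2) ∂gaussianReal 0 v := by
        rw [lintegral_const, Measure.restrict_apply_univ, volume_Ioc, sub_zero,
          ENNReal.ofReal_mul (by positivity), sq, ENNReal.ofReal_mul (by positivity),
          ENNReal.ofReal_coe_nnreal]
        ring

lemma integral_sq_sub_prod_self {α : Type*} [MeasurableSpace α] {μ : Measure α}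
    [IsProbabilityMeasure μ] {f : α → ℝ} (hf : MemLp f 2 μ) :
    ∫ p, (f p.2 - f p.1) ^ 2 ∂μ.prod μ = 2 * Var[f; μ] := by
  have h_var := variance_add_prod hf.neg hf
  have h_memLp : MemLp (fun p : α × α => f p.2 - f p.1) 2 (μ.prod μ) :=
    (hf.comp_snd μ).sub (hf.comp_fst μ)
  have h_mean : ∫ p : α × α, (f p.2 - f p.1) ∂μ.prod μ = 0 := by
    rw [integral_sub ((hf.integrable one_le_two).comp_snd μ)
      ((hf.integrable one_le_two).comp_fst μ), integral_fun_snd, integral_fun_fst, sub_self]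
  rw [← variance_of_integral_eq_zero h_memLp.aemeasurable h_mean, two_mul]
  simpa [neg_add_eq_sub, variance_neg] using h_var

theorem variance_gaussianReal_le (v : ℝ≥0) {f : ℝ → ℝ} (hf : ContDiff ℝ 1 f)
    (hf_memLp : MemLp f 2 (gaussianReal 0 v)) (hf_deriv : MemLp (deriv f) 2 (gaussianReal 0 v)) :
    Var[f; gaussianReal 0 v] ≤ π ^ 2 / 8 * v * ∫ z, deriv f z ^ 2 ∂gaussianReal 0 v := by
  have h_diff : Integrable (fun p : ℝ × ℝ => (f p.2 - f p.1) ^ 2)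
      ((gaussianReal 0 v).prod (gaussianReal 0 v)) :=
    ((hf_memLp.comp_snd _).sub (hf_memLp.comp_fst _)).integrable_sq
  have h_le := lintegral_sq_sub_gaussianReal_le v hf
  rw [← ofReal_integral_eq_lintegral_ofReal h_diff (.of_forall fun _ => sq_nonneg _),
    ← ofReal_integral_eq_lintegral_ofReal hf_deriv.integrable_sq (.of_forall fun _ => sq_nonneg _),
    ← ENNReal.ofReal_mul (by positivity), ENNReal.ofReal_le_ofReal_iff
      (mul_nonneg (by positivity) (integral_nonneg fun _ => sq_nonneg _)),
    integral_sq_sub_prod_self hf_memLp] at h_le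
  linarith

/-! ### Gaussian readout of a random hidden layer -/

lemma integral_abs_sub_integral_le_sqrt_variance {α : Type*} [MeasurableSpace α] {μ : Measure α}
    [IsProbabilityMeasure μ] {X : α → ℝ} (hX : MemLp X 2 μ) :
    ∫ a, |X a - ∫ b, X b ∂μ| ∂μ ≤ √(Var[X; μ]) := by
  have h_sq := sq_integral_le (hX.sub (memLp_const (∫ b, X b ∂μ))).abs
  rw [variance_eq_integral hX.aemeasurable]
  exact le_sqrt_of_sq_le (by simpa using h_sq)

section Pi

variable {ι : Type*} [Fintype ι] {Ω : ι → Type*} [∀ i, MeasurableSpace (Ω i)]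
  {μ : ∀ i, Measure (Ω i)} [∀ i, IsProbabilityMeasure (μ i)] {X : ∀ i, Ω i → ℝ}

lemma memLp_sum_pi {p : ℝ≥0∞} (hX : ∀ i, MemLp (X i) p (μ i)) :
    MemLp (fun ω => ∑ i, X i (ω i)) p (Measure.pi μ) :=
  memLp_finsetSum _ fun i _ => (hX i).comp_measurePreserving (measurePreserving_eval μ i)

lemma integral_sum_pi (hX : ∀ i, Integrable (X i) (μ i)) :
    ∫ ω, ∑ i, X i (ω i) ∂Measure.pi μ = ∑ i, ∫ a, X i a ∂μ i := by
  rw [integral_finsetSum _ fun i _ => integrable_comp_eval (hX i)]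
  simp only [integral_comp_eval (hX _).aestronglyMeasurable]

lemma variance_fun_sum_pi (hX : ∀ i, MemLp (X i) 2 (μ i)) :
    Var[fun ω => ∑ i, X i (ω i); Measure.pi μ] = ∑ i, Var[X i; μ i] := by
  rw [← variance_sum_pi hX, Finset.sum_fn]

end Pi

lemma integral_abs_mean_sub_integral_le {α κ : Type*} [MeasurableSpace α] [Fintype κ] [Nonempty κ]
    {ν : Measure α} [IsProbabilityMeasure ν] {f : α → ℝ} (hf : MemLp f 2 ν) :
    ∫ y : κ → α, |(Fintype.card κ : ℝ)⁻¹ * ∑ j, f (y j) - ∫ a, f a ∂ν| ∂Measure.pi (fun _ => ν) ≤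
      (√(Fintype.card κ))⁻¹ * √(Var[f; ν]) := by
  have h_card : (Fintype.card κ : ℝ) ≠ 0 := by simp
  have h_dev := integral_abs_sub_integral_le_sqrt_variance
    ((memLp_sum_pi fun _ : κ => hf).const_mul (Fintype.card κ : ℝ)⁻¹)
  have h_mean : (Fintype.card κ : ℝ)⁻¹ * ∑ _ : κ, ∫ a, f a ∂ν = ∫ a, f a ∂ν := by
    rw [Finset.sum_const, Finset.card_univ, nsmul_eq_mul, inv_mul_cancel_left₀ h_card]
  have h_var : ((Fintype.card κ : ℝ)⁻¹) ^ 2 * ∑ _ : κ, Var[f; ν] =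
      (Fintype.card κ : ℝ)⁻¹ * Var[f; ν] := by
    rw [Finset.sum_const, Finset.card_univ, nsmul_eq_mul]
    field_simp
  rwa [variance_const_mul, variance_fun_sum_pi fun _ => hf, integral_const_mul,
    integral_sum_pi fun _ => hf.integrable one_le_two, h_mean, h_var, sqrt_mul (by positivity),
    sqrt_inv] at h_dev

lemma isGaussian_pi {ι : Type*} [Fintype ι] (μ : ι → Measure ℝ) [∀ i, IsGaussian (μ i)] :
    IsGaussian (Measure.pi μ) := by
  have h_indep : iIndepFun (fun i (w : ι → ℝ) => w i) (Measure.pi μ) :=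
    iIndepFun_pi (X := fun _ => id) fun _ => aemeasurable_id
  have h_law := iIndepFun.hasGaussianLaw (fun i => ⟨by
    rw [(measurePreserving_eval μ i).map_eq]; infer_instance⟩) h_indep
  simpa using h_law.isGaussian_map

lemma map_sum_mul_add_mul_gaussianReal {ι : Type*} [Fintype ι] (c : ι → ℝ) (e : ℝ) :
    ((Measure.pi fun _ : ι => gaussianReal 0 1).prod (gaussianReal 0 1)).map
        (fun p => ∑ i, p.1 i * c i + e * p.2) =
      gaussianReal 0 (∑ i, c i ^ 2 + e ^ 2).toNNReal := by
  have := isGaussian_pi fun _ : ι => gaussianReal 0 1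
  let L : StrongDual ℝ ((ι → ℝ) × ℝ) :=
    (∑ i, c i • ContinuousLinearMap.proj i) ∘L .fst ℝ (ι → ℝ) ℝ + e • .snd ℝ (ι → ℝ) ℝ
  have hL : ⇑L = fun p => ∑ i, p.1 i * c i + e * p.2 := by
    ext p
    simp [L, mul_comm]
  have h_term (i : ι) : MemLp (fun y => y * c i) 2 (gaussianReal 0 1) :=
    (memLp_id_gaussianReal 2).mul_const (c i)
  have h_fst := memLp_sum_pi h_term
  have h_snd : MemLp (fun y => e * y) 2 (gaussianReal 0 1) := (memLp_id_gaussianReal 2).const_mul e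
  rw [← hL, IsGaussian.map_eq_gaussianReal, hL, variance_add_prod h_fst h_snd,
    variance_fun_sum_pi h_term, variance_const_mul, integral_add
      ((h_fst.integrable one_le_two).comp_fst _) ((h_snd.integrable one_le_two).comp_snd _),
    integral_fun_fst (fun w : ι → ℝ => ∑ i, w i * c i), integral_fun_snd (fun y => e * y),
    integral_sum_pi fun i => (h_term i).integrable one_le_two, integral_const_mul]
  simp [variance_mul_const, integral_mul_const]

lemma dKS_readout_le {α κ : Type*} [MeasurableSpace α] [Fintype κ] [Nonempty κ] {ν : Measure α}
    [IsProbabilityMeasure ν] {f : α → ℝ} (hf : Measurable f)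
    (hf_memLp : MemLp (fun a => f a ^ 2) 2 ν) (A B : ℝ) {s : ℝ}
    (hs : s = A ^ 2 * ∫ a, f a ^ 2 ∂ν + B ^ 2) (hs_pos : 0 < s) :
    dKS (((Measure.pi fun _ : κ => ν).prod
          ((Measure.pi fun _ : κ => gaussianReal 0 1).prod (gaussianReal 0 1))).map fun ω =>
        (√(Fintype.card κ))⁻¹ * A * ∑ j, ω.2.1 j * f (ω.1 j) + B * ω.2.2)
      (gaussianReal 0 s.toNNReal) ≤
      3 / 4 / s * (A ^ 2 * ((√(Fintype.card κ))⁻¹ * √(Var[fun a => f a ^ 2; ν]))) := by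
  let V (y : κ → α) : ℝ := A ^ 2 * ((Fintype.card κ : ℝ)⁻¹ * ∑ j, f (y j) ^ 2) + B ^ 2
  have h_memLp : MemLp (fun y : κ → α => (Fintype.card κ : ℝ)⁻¹ * ∑ j, f (y j) ^ 2
      - ∫ a, f a ^ 2 ∂ν) 2 (Measure.pi fun _ => ν) :=
    ((memLp_sum_pi fun _ => hf_memLp).const_mul _).sub (memLp_const _)
  have h_fiber (y : κ → α) :
      ((Measure.pi fun _ : κ => gaussianReal 0 1).prod (gaussianReal 0 1)).map
          (fun p => (√(Fintype.card κ))⁻¹ * A * ∑ j, p.1 j * f (y j) + B * p.2) =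
        gaussianReal 0 (V y).toNNReal := by
    convert map_sum_mul_add_mul_gaussianReal
      (fun j => (√(Fintype.card κ))⁻¹ * A * f (y j)) B using 3
    · simp only [Finset.mul_sum, mul_left_comm]
    · simp only [V, mul_pow, inv_pow, sq_sqrt (Nat.cast_nonneg _), ← Finset.mul_sum]
      ring
  have h_dev (y : κ → α) : dKS (gaussianReal 0 (V y).toNNReal) (gaussianReal 0 s.toNNReal) ≤
      3 / 4 / s * (A ^ 2 * |(Fintype.card κ : ℝ)⁻¹ * ∑ j, f (y j) ^ 2 - ∫ a, f a ^ 2 ∂ν|) := by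
    refine (dKS_gaussianReal_le _ (toNNReal_pos.2 hs_pos).ne').trans_eq ?_
    rw [coe_toNNReal _ hs_pos.le, coe_toNNReal _ (by positivity), hs, add_sub_add_right_eq_sub,
      ← mul_sub, abs_mul, abs_of_nonneg (sq_nonneg A)]
    ring
  calc _ ≤ ∫ y : κ → α, 3 / 4 / s *
        (A ^ 2 * |(Fintype.card κ : ℝ)⁻¹ * ∑ j, f (y j) ^ 2 - ∫ a, f a ^ 2 ∂ν|)
        ∂Measure.pi (fun _ => ν) :=
        dKS_map_prod_le_integral (by fun_prop)
          (((h_memLp.abs.integrable one_le_two).const_mul _).const_mul _) fun y => by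
            rw [h_fiber]; exact h_dev y
    _ ≤ _ := by
        rw [integral_const_mul, integral_const_mul]
        gcongr
        exact integral_abs_mean_sub_integral_le hf_memLp

/-! ### One-hidden-layer networks -/

lemma memLp_add_mul_abs_rpow_gaussianReal (a b m : ℝ) (v : ℝ≥0) {γ : ℝ} (hγ : 0 ≤ γ) {p : ℝ≥0∞}
    (hp : p ≠ ∞) : MemLp (fun y => a + b * |y| ^ γ) p (gaussianReal m v) := by
  refine (memLp_const a).add (.const_mul ?_ b)
  rcases hγ.eq_or_lt with rfl | hγ
  · simpa using memLp_const (1 : ℝ)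
  · have h_id := memLp_id_gaussianReal' (μ := m) (v := v) (p * ENNReal.ofReal γ)
      (ENNReal.mul_ne_top hp ENNReal.ofReal_ne_top)
    have h_rpow := h_id.norm_rpow_div (ENNReal.ofReal γ)
    rwa [ENNReal.mul_div_cancel_right (by simpa using hγ) ENNReal.ofReal_ne_top,
      ENNReal.toReal_ofReal hγ.le] at h_rpow

instance holderTriple_four_four_two : ENNReal.HolderTriple 4 4 2 where
  inv_add_inv_eq_inv := by
    rw [← two_mul, show (4 : ℝ≥0∞) = 2 * 2 by norm_num,
      ENNReal.mul_inv (.inl two_ne_zero) (.inl ENNReal.ofNat_ne_top), ← mul_assoc,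
      ENNReal.mul_inv_cancel two_ne_zero ENNReal.ofNat_ne_top, one_mul]

theorem variance_sq_gaussianReal_le (v : ℝ≥0) {τ g : ℝ → ℝ} (hτ : ContDiff ℝ 1 τ)
    (hg : MemLp g 4 (gaussianReal 0 v)) (hτg : ∀ y, |τ y| ≤ g y)
    (hτg' : ∀ y, |deriv τ y| ≤ g y) :
    Var[fun y => τ y ^ 2; gaussianReal 0 v] ≤
      π ^ 2 / 2 * v * ∫ y, g y ^ 4 ∂gaussianReal 0 v := by
  have h_memLp : MemLp τ 4 (gaussianReal 0 v) :=
    hg.mono' hτ.continuous.aestronglyMeasurable (.of_forall hτg)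
  have h_memLp' : MemLp (deriv τ) 4 (gaussianReal 0 v) :=
    hg.mono' (hτ.continuous_deriv le_rfl).aestronglyMeasurable (.of_forall hτg')
  have h_sq : MemLp (fun y => τ y ^ 2) 2 (gaussianReal 0 v) := by
    simpa only [sq] using h_memLp.mul' h_memLp
  have h_prod : MemLp (fun y => τ y * deriv τ y) 2 (gaussianReal 0 v) := h_memLp'.mul' h_memLp
  have h_deriv : deriv (fun y => τ y ^ 2) = fun y => 2 * (τ y * deriv τ y) := by
    ext y
    rw [((hτ.differentiable one_ne_zero y).hasDerivAt.fun_pow 2).deriv]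
    ring
  have h_g4 : Integrable (fun y => g y ^ 4) (gaussianReal 0 v) := by
    simpa [Even.pow_abs (by decide : Even 4)] using hg.integrable_norm_pow four_ne_zero
  calc Var[fun y => τ y ^ 2; gaussianReal 0 v]
      ≤ π ^ 2 / 8 * v * ∫ y, (2 * (τ y * deriv τ y)) ^ 2 ∂gaussianReal 0 v := by
        have h := variance_gaussianReal_le v (hτ.pow 2) h_sq (h_deriv ▸ h_prod.const_mul 2)
        rwa [h_deriv] at h
    _ ≤ π ^ 2 / 8 * v * ∫ y, 4 * g y ^ 4 ∂gaussianReal 0 v := by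
        refine mul_le_mul_of_nonneg_left (integral_mono (h_prod.const_mul 2).integrable_sq
          (h_g4.const_mul 4) fun y => ?_) (by positivity)
        calc (2 * (τ y * deriv τ y)) ^ 2 = 4 * (|τ y| ^ 2 * |deriv τ y| ^ 2) := by
              rw [sq_abs, sq_abs]; ring
          _ ≤ 4 * (g y ^ 2 * g y ^ 2) := by gcongr <;> simp [hτg, hτg']
          _ = 4 * g y ^ 4 := by ring
    _ = π ^ 2 / 2 * v * ∫ y, g y ^ 4 ∂gaussianReal 0 v := by
        rw [integral_const_mul]; ring

lemma sqrt_variance_sq_gaussianReal_le {c : ℝ} (hc : 0 ≤ c) {τ g : ℝ → ℝ} (hτ : ContDiff ℝ 1 τ)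
    (hg : MemLp g 4 (gaussianReal 0 (c ^ 2).toNNReal)) (hτg : ∀ y, |τ y| ≤ g y)
    (hτg' : ∀ y, |deriv τ y| ≤ g y) :
    √(Var[fun y => τ y ^ 2; gaussianReal 0 (c ^ 2).toNNReal]) ≤
      8 / 3 * (c * √(∫ z, g (c * z) ^ 4 ∂gaussianReal 0 1)) := by
  have h_var := variance_sq_gaussianReal_le _ hτ hg hτg hτg'
  have h_scale : ∫ z, g (c * z) ^ 4 ∂gaussianReal 0 1 =
      ∫ y, g y ^ 4 ∂gaussianReal 0 (c ^ 2).toNNReal :=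
    (measurePreserving_const_mul_gaussianReal c).hasLaw.integral_comp
      (hg.aestronglyMeasurable.pow 4)
  rw [← h_scale, coe_toNNReal _ (sq_nonneg c)] at h_var
  have hM : 0 ≤ ∫ z, g (c * z) ^ 4 ∂gaussianReal 0 1 := integral_nonneg fun _ => by positivity
  have h_pi : π ^ 2 / 2 ≤ (8 / 3) ^ 2 := by nlinarith [pi_pos, pi_lt_d2]
  refine sqrt_le_iff.2 ⟨by positivity, h_var.trans ?_⟩
  rw [mul_pow, mul_pow, sq_sqrt hM, ← mul_assoc]
  gcongr

lemma measurePreserving_preactivation {ι : Type*} [Fintype ι] (x : ι → ℝ) (σw σb : ℝ) :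
    MeasurePreserving (fun p : (ι → ℝ) × ℝ => σw * ∑ i, p.1 i * x i + σb * p.2)
      ((Measure.pi fun _ => gaussianReal 0 1).prod (gaussianReal 0 1))
      (gaussianReal 0 (σw ^ 2 * ∑ i, x i ^ 2 + σb ^ 2).toNNReal) := by
  refine ⟨by fun_prop, ?_⟩
  simpa only [mul_left_comm _ σw, mul_pow, ← Finset.mul_sum] using
    map_sum_mul_add_mul_gaussianReal (fun i => σw * x i) σb

lemma measurePreserving_groupByNeuron {κ α β R B : Type*} [Fintype κ] [MeasurableSpace α]
    [MeasurableSpace β] [MeasurableSpace R] [MeasurableSpace B] (μ : Measure α) (ν : Measure β)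
    (ρ : Measure R) (η : Measure B) [IsProbabilityMeasure μ] [IsProbabilityMeasure ν]
    [IsProbabilityMeasure ρ] [IsProbabilityMeasure η] :
    MeasurePreserving
      (fun ω : R × (κ → α) × (κ → β) × B => (fun j => (ω.2.1 j, ω.2.2.1 j), (ω.1, ω.2.2.2)))
      (ρ.prod ((Measure.pi fun _ => μ).prod ((Measure.pi fun _ => ν).prod η)))
      ((Measure.pi fun _ => μ.prod ν).prod (ρ.prod η)) := by
  have h_pair := (measurePreserving_arrowProdEquivProdArrow α β κ
    (fun _ => μ) (fun _ => ν)).symm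
  have h_assoc := (measurePreserving_prodAssoc (Measure.pi fun _ : κ => μ)
    (Measure.pi fun _ : κ => ν) η).symm
  have h_hidden := (h_pair.prod (.id η)).comp h_assoc
  have h_assoc' := (measurePreserving_prodAssoc ρ (Measure.pi fun _ : κ => μ.prod ν) η).symm
  exact (measurePreserving_prodAssoc _ _ _).comp
    ((Measure.measurePreserving_swap.prod (.id η)).comp
      (h_assoc'.comp ((MeasurePreserving.id ρ).prod h_hidden)))

/-- The law of the parameters of a network with hidden neurons `κ` and inputs `ι`: the readout
weights, hidden weights, hidden biases and readout bias, in this order, are all independent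
standard Gaussians. -/
noncomputable def gaussianWeights (κ ι : Type*) [Fintype κ] [Fintype ι] :
    Measure ((κ → ℝ) × (κ → ι → ℝ) × (κ → ℝ) × ℝ) :=
  (Measure.pi fun _ => gaussianReal 0 1).prod
    ((Measure.pi fun _ => Measure.pi fun _ => gaussianReal 0 1).prod
      ((Measure.pi fun _ => gaussianReal 0 1).prod (gaussianReal 0 1)))

/-- The output `F` of the one-hidden-layer network with activation `τ` at the input `x`, as a
function of the parameters, ordered as in `gaussianWeights`. -/
noncomputable def networkOutput {ι κ : Type*} [Fintype ι] [Fintype κ] (τ : ℝ → ℝ) (x : ι → ℝ)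
    (σw σb : ℝ) (ω : (κ → ℝ) × (κ → ι → ℝ) × (κ → ℝ) × ℝ) : ℝ :=
  (√(Fintype.card κ))⁻¹ * σw *
      ∑ j, ω.1 j * τ (σw * ∑ i, ω.2.1 j i * x i + σb * ω.2.2.1 j) + σb * ω.2.2.2

lemma dKS_network_le {ι κ : Type*} [Fintype ι] [Fintype κ] [Nonempty κ] (x : ι → ℝ) (σw σb : ℝ)
    {τ : ℝ → ℝ} (hτ : Measurable τ) {Γ : ℝ} (hΓ : Γ = √(σw ^ 2 * ∑ i, x i ^ 2 + σb ^ 2))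
    (hτ_memLp : MemLp (fun y => τ y ^ 2) 2 (gaussianReal 0 (Γ ^ 2).toNNReal)) {σ2 : ℝ}
    (hσ2 : σ2 = σw ^ 2 * ∫ z, τ (Γ * z) ^ 2 ∂gaussianReal 0 1 + σb ^ 2) (hσ2_pos : 0 < σ2) :
    dKS ((gaussianWeights κ ι).map (networkOutput τ x σw σb)) (gaussianReal 0 σ2.toNNReal) ≤
      3 / 4 / σ2 * (σw ^ 2 * ((√(Fintype.card κ))⁻¹ *
        √(Var[fun y => τ y ^ 2; gaussianReal 0 (Γ ^ 2).toNNReal]))) := by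
  have h_preact := measurePreserving_preactivation x σw σb
  rw [← sq_sqrt (show 0 ≤ σw ^ 2 * ∑ i, x i ^ 2 + σb ^ 2 by positivity), ← hΓ] at h_preact
  have h_sq : Measurable fun y => τ y ^ 2 := by fun_prop
  have h_mean : ∫ z, τ (Γ * z) ^ 2 ∂gaussianReal 0 1 =
      ∫ p : (ι → ℝ) × ℝ, τ (σw * ∑ i, p.1 i * x i + σb * p.2) ^ 2
        ∂(Measure.pi fun _ => gaussianReal 0 1).prod (gaussianReal 0 1) :=
    have h_scale := measurePreserving_const_mul_gaussianReal Γ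
    (h_scale.hasLaw.integral_comp h_sq.aestronglyMeasurable).trans
      (h_preact.hasLaw.integral_comp h_sq.aestronglyMeasurable).symm
  have h_law := measurePreserving_groupByNeuron (κ := κ)
    (Measure.pi fun _ : ι => gaussianReal 0 1) (gaussianReal 0 1)
    (Measure.pi fun _ : κ => gaussianReal 0 1) (gaussianReal 0 1)
  rw [h_mean] at hσ2
  have h_readout := dKS_readout_le (κ := κ) (hτ.comp h_preact.measurable)
    (hτ_memLp.comp_measurePreserving h_preact) σw σb hσ2 hσ2_pos
  rw [← h_law.map_eq, Measure.map_map (by fun_prop) h_law.measurable] at h_readout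
  rwa [← h_preact.variance_fun_comp h_sq.aemeasurable]

theorem gaussian_nn_ks_bound_general {ι κ : Type*} [Fintype ι] [Fintype κ] [Nonempty κ]
    (x : ι → ℝ) (σw σb : ℝ) {τ g : ℝ → ℝ} (hτ : ContDiff ℝ 1 τ) (hτg : ∀ y, |τ y| ≤ g y)
    (hτg' : ∀ y, |deriv τ y| ≤ g y) {Γ : ℝ} (hΓ : Γ = √(σw ^ 2 * ∑ i, x i ^ 2 + σb ^ 2))
    (hg : MemLp g 4 (gaussianReal 0 (Γ ^ 2).toNNReal)) {σ2 : ℝ}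
    (hσ2 : σ2 = σw ^ 2 * ∫ z, τ (Γ * z) ^ 2 ∂gaussianReal 0 1 + σb ^ 2) (hσ2_pos : 0 < σ2) :
    dKS ((gaussianWeights κ ι).map (networkOutput τ x σw σb)) (gaussianReal 0 σ2.toNNReal) ≤
      (√(Fintype.card κ))⁻¹ * (2 / σ2) * σw ^ 2 * Γ *
        ((∫ z, g (Γ * z) ^ 4 ∂gaussianReal 0 1) ^ ((1 : ℝ) / 4)) ^ 2 := by
  have hΓ_nonneg : 0 ≤ Γ := hΓ ▸ sqrt_nonneg _
  have h_memLp : MemLp τ 4 (gaussianReal 0 (Γ ^ 2).toNNReal) :=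
    hg.mono' hτ.continuous.aestronglyMeasurable (.of_forall hτg)
  have h_memLp_sq : MemLp (fun y => τ y ^ 2) 2 (gaussianReal 0 (Γ ^ 2).toNNReal) := by
    simpa only [sq] using h_memLp.mul' h_memLp
  have h_root : ((∫ z, g (Γ * z) ^ 4 ∂gaussianReal 0 1) ^ ((1 : ℝ) / 4)) ^ 2 =
      √(∫ z, g (Γ * z) ^ 4 ∂gaussianReal 0 1) := by
    rw [sqrt_eq_rpow, ← rpow_mul_natCast (integral_nonneg fun _ => by positivity)]
    norm_num
  calc _ ≤ 3 / 4 / σ2 * (σw ^ 2 * ((√(Fintype.card κ))⁻¹ *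
          √(Var[fun y => τ y ^ 2; gaussianReal 0 (Γ ^ 2).toNNReal]))) :=
        dKS_network_le x σw σb hτ.continuous.measurable hΓ h_memLp_sq hσ2 hσ2_pos
    _ ≤ 3 / 4 / σ2 * (σw ^ 2 * ((√(Fintype.card κ))⁻¹ *
          (8 / 3 * (Γ * √(∫ z, g (Γ * z) ^ 4 ∂gaussianReal 0 1))))) := by
        gcongr
        exact sqrt_variance_sq_gaussianReal_le hΓ_nonneg hτ hg hτg hτg'
    _ = _ := by rw [h_root]; ring

theorem gaussian_nn_ks_bound
    (d : ℕ) (hd : 1 ≤ d) (x : Fin d → ℝ) (σw σb : ℝ) (hσw : 0 < σw) (hσb : 0 < σb)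
    (τ : ℝ → ℝ) (a b γ : ℝ) (ha : 0 ≤ a) (hb : 0 ≤ b) (hγ : 0 ≤ γ)
    (hτ : ContDiff ℝ 2 τ)
    (hτ0 : ∀ y : ℝ, |τ y| ≤ a + b * |y| ^ γ)
    (hτ1 : ∀ y : ℝ, |deriv τ y| ≤ a + b * |y| ^ γ)
    (hτ2 : ∀ y : ℝ, |deriv (deriv τ) y| ≤ a + b * |y| ^ γ)
    (Γ : ℝ) (hΓ : Γ = Real.sqrt (σw ^ 2 * (∑ i, (x i) ^ 2) + σb ^ 2))
    (σ2 : ℝ) (hσ2 : σ2 = σw ^ 2 * (∫ z, (τ (Γ * z)) ^ 2 ∂gaussianReal 0 1) + σb ^ 2)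
    (n : ℕ) (hn : 1 ≤ n) :
    dKS
      (Measure.map
        (fun ω : (Fin n → ℝ) × (Fin n → (Fin d → ℝ)) × (Fin n → ℝ) × ℝ =>
          (Real.sqrt n)⁻¹ * σw *
              (∑ j, ω.1 j * τ (σw * (∑ i, ω.2.1 j i * x i) + σb * ω.2.2.1 j))
            + σb * ω.2.2.2)
        ((Measure.pi fun _ : Fin n => gaussianReal 0 1).prod
          ((Measure.pi fun _ : Fin n => Measure.pi fun _ : Fin d => gaussianReal 0 1).prod
            ((Measure.pi fun _ : Fin n => gaussianReal 0 1).prod (gaussianReal 0 1)))))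
      (gaussianReal 0 σ2.toNNReal)
      ≤ (Real.sqrt n)⁻¹
        * (2 / σ2)
        * σw ^ 2
        * Real.sqrt (Γ ^ 2 + Γ ^ 4 * (2 + Real.sqrt (3 * (1 + 2 * Γ ^ 2 + 3 * Γ ^ 4))))
        * ((∫ z, (a + b * |Γ * z| ^ γ) ^ 4 ∂gaussianReal 0 1) ^ ((1:ℝ)/4)) ^ 2 := by
  have : Nonempty (Fin n) := Fin.pos_iff_nonempty.1 hn
  have hσ2_pos : 0 < σ2 := by
    have : 0 ≤ ∫ z, τ (Γ * z) ^ 2 ∂gaussianReal 0 1 := integral_nonneg fun _ => sq_nonneg _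
    rw [hσ2]
    positivity
  have h_general := gaussian_nn_ks_bound_general (κ := Fin n) x σw σb (hτ.of_le one_le_two)
    hτ0 hτ1 hΓ (memLp_add_mul_abs_rpow_gaussianReal a b 0 _ hγ ENNReal.ofNat_ne_top) hσ2 hσ2_pos
  unfold gaussianWeights networkOutput at h_general
  rw [Fintype.card_fin] at h_general
  refine h_general.trans ?_
  gcongr
  exact le_sqrt_of_sq_le (le_add_of_nonneg_right (by positivity))
end

section
/- Let X ~ N(0, I_{d×d}) be a standard Gaussian vector in ℝ^d and let F = f(X) for some f ∈ C²(ℝ^d) whose partial derivatives of order up to two have sub-exponential growth. Assume E[F] = 0 and E[F²] = σ² > 0, and let N ~ N(0, σ²). Then d_{W1}(F, N) ≤ √(8/(σ²π)) · √( Σ_{l,m=1}^d { E[ (⟨∇²_{l,·}F, ∇²_{m,·}F⟩)² ] }^{1/2} · { E[ (∇_l F · ∇_m F)² ] }^{1/2} ), where ∇_l F is the l-th partial derivative of f evaluated at X, ∇²_{l,·}F is the l-th row of the Hessian matrix of f evaluated at X, and ⟨·,·⟩ is the Euclidean inner product on ℝ^d. -/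
open MeasureTheory ProbabilityTheory Real

/-- The 1-Wasserstein distance between two distributions:
`sup_h |E[h(X)] − E[h(Y)]|` over 1-Lipschitz functions `h`. -/
noncomputable def dW1 {E : Type*} [MeasurableSpace E] [PseudoMetricSpace E]
    (μ ν : Measure E) : ℝ :=
  ⨆ h : {h : E → ℝ // LipschitzWith 1 h}, |(∫ x, h.1 x ∂μ) - ∫ x, h.1 x ∂ν|

/-- The partial derivative `∂f/∂x_l` of `f : ℝ^d → ℝ` at `x`. -/
noncomputable def pderiv1 {d : ℕ} (f : (Fin d → ℝ) → ℝ) (l : Fin d)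
    (x : Fin d → ℝ) : ℝ :=
  fderiv ℝ f x (Pi.single l 1)

/-- The second partial derivative `∂²f/(∂x_l ∂x_m)` of `f : ℝ^d → ℝ` at `x`. -/
noncomputable def pderiv2 {d : ℕ} (f : (Fin d → ℝ) → ℝ) (l m : Fin d)
    (x : Fin d → ℝ) : ℝ :=
  fderiv ℝ (fun y => fderiv ℝ f y (Pi.single m 1)) x (Pi.single l 1)

/-!
Let `X`, `Y` be independent standard Gaussian vectors and `X_θ = cos θ • X + sin θ • Y`. The pair
`(X, Y)` is rotation invariant, so Gaussian integration by parts gives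
`d/dθ E[g(X) f(X_θ)] = -sin θ * E⟪∇ g(X), ∇ f(X_θ)⟫`, and integrating over `[0, π / 2]` represents
`Cov(g(X), f(X))` by the gradients. Taking `g = φ ∘ f` shows that
`τ(x) = ∫₀^{π/2} sin θ * E⟪∇ f(x), ∇ f(cos θ • x + sin θ • Y)⟫ dθ` is a Stein kernel of `F = f(X)`,
of mean `σ² = Var F`; taking `g = f` gives the Gaussian Poincaré inequality, which applied to `τ`
and followed by Cauchy–Schwarz bounds `Var τ(X)` by four times the Hessian–gradient sum `S`.
Finally, differentiating `E[u(cos s * F + sin s * N)]` along the arc from `F` to an independent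
`N ~ N(0, σ²)` yields `d_{W1}(F, N) ≤ √(2 / π) / σ * E|τ(X) - σ²| ≤ √(2 / π) / σ * √(4 * S)`.
-/

open scoped InnerProductSpace NNReal Gradient

section SubexponentialGrowth

variable {E F G H : Type*} [NormedAddCommGroup E] [NormedAddCommGroup F] [NormedAddCommGroup G]
  [NormedAddCommGroup H]

/-- Continuous functions of sub-exponential growth: the amplitude and the rate of the exponential
bound are merged into a single constant. -/
structure SubexpContinuous {E F : Type*} [NormedAddCommGroup E] [NormedAddCommGroup F]
    (g : E → F) : Prop where
  continuous : Continuous g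
  exists_norm_le : ∃ C : ℝ, ∀ x, ‖g x‖ ≤ C * exp (C * ‖x‖)

namespace SubexpContinuous

variable {f : E → F} {g : E → G}

theorem of_norm_le {A B : ℝ} (hg : Continuous g) (h : ∀ x, ‖g x‖ ≤ A * exp (B * ‖x‖)) :
    SubexpContinuous g := by
  refine ⟨hg, max A B, fun x ↦ (h x).trans ?_⟩
  have hA : 0 ≤ A := by simpa using (norm_nonneg _).trans (h 0)
  gcongr
  exacts [le_max_left A B, le_max_right A B]

theorem of_bounded {A : ℝ} (hg : Continuous g) (h : ∀ x, ‖g x‖ ≤ A) : SubexpContinuous g :=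
  of_norm_le (B := 0) hg fun x ↦ by simpa using h x

theorem norm (hg : SubexpContinuous g) : SubexpContinuous fun x ↦ ‖g x‖ :=
  ⟨hg.continuous.norm, by simpa using hg.exists_norm_le⟩

theorem comp {φ : E → F} {g : F → G} (hg : SubexpContinuous g) (hφ : Continuous φ) {a b : ℝ}
    (h : ∀ x, ‖φ x‖ ≤ a + b * ‖x‖) : SubexpContinuous fun x ↦ g (φ x) := by
  obtain ⟨C, hC⟩ := hg.exists_norm_le
  have hC₀ : 0 ≤ C := by simpa using (norm_nonneg _).trans (hC 0)
  refine of_norm_le (A := C * exp (C * a)) (B := C * b) (hg.continuous.comp hφ) fun x ↦ ?_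
  calc ‖g (φ x)‖ ≤ C * exp (C * ‖φ x‖) := hC _
    _ ≤ C * exp (C * (a + b * ‖x‖)) := by gcongr; exact h x
    _ = C * exp (C * a) * exp (C * b * ‖x‖) := by rw [mul_add, exp_add]; ring_nf

theorem comp_fst (hg : SubexpContinuous g) : SubexpContinuous fun p : E × F ↦ g p.1 :=
  hg.comp (a := 0) (b := 1) continuous_fst fun p ↦ by simpa using norm_fst_le p

theorem comp_snd (hg : SubexpContinuous g) : SubexpContinuous fun p : F × E ↦ g p.2 :=
  hg.comp (a := 0) (b := 1) continuous_snd fun p ↦ by simpa using norm_snd_le p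

theorem add {f g : E → F} (hf : SubexpContinuous f) (hg : SubexpContinuous g) :
    SubexpContinuous fun x ↦ f x + g x := by
  obtain ⟨C, hC⟩ := hf.exists_norm_le
  obtain ⟨D, hD⟩ := hg.exists_norm_le
  have hC₀ : 0 ≤ C := by simpa using (norm_nonneg _).trans (hC 0)
  have hD₀ : 0 ≤ D := by simpa using (norm_nonneg _).trans (hD 0)
  refine of_norm_le (A := C + D) (B := C + D) (hf.continuous.add hg.continuous) fun x ↦ ?_
  calc ‖f x + g x‖ ≤ C * exp (C * ‖x‖) + D * exp (D * ‖x‖) :=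
        (norm_add_le _ _).trans (add_le_add (hC x) (hD x))
    _ ≤ C * exp ((C + D) * ‖x‖) + D * exp ((C + D) * ‖x‖) := by gcongr <;> linarith
    _ = (C + D) * exp ((C + D) * ‖x‖) := by ring

theorem exists_norm_prod_le {h : F × E → G} (hh : SubexpContinuous h) :
    ∃ C : ℝ, 0 ≤ C ∧ ∀ t x, ‖h (t, x)‖ ≤ C * exp (C * ‖t‖) * exp (C * ‖x‖) := by
  obtain ⟨C, hC⟩ := hh.exists_norm_le
  have hC₀ : 0 ≤ C := by simpa using (norm_nonneg _).trans (hC 0)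
  refine ⟨C, hC₀, fun t x ↦ (hC _).trans ?_⟩
  rw [mul_assoc, ← exp_add, ← mul_add]
  gcongr
  exact max_le_add_of_nonneg (norm_nonneg t) (norm_nonneg x)

variable [NormedSpace ℝ F] [NormedSpace ℝ G] [NormedSpace ℝ H]

theorem clm [NormedSpace ℝ E] (L : E →L[ℝ] F) : SubexpContinuous L :=
  of_norm_le (A := ‖L‖) (B := 1) L.continuous fun x ↦ (L.le_opNorm x).trans <| by
    gcongr
    linarith [add_one_le_exp (1 * ‖x‖)]

theorem bilin (B : F →L[ℝ] G →L[ℝ] H) (hf : SubexpContinuous f) (hg : SubexpContinuous g) :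
    SubexpContinuous fun x ↦ B (f x) (g x) := by
  obtain ⟨C, hC⟩ := hf.exists_norm_le
  obtain ⟨D, hD⟩ := hg.exists_norm_le
  have hcont : Continuous fun x ↦ B (f x) (g x) := by
    have := hf.continuous
    have := hg.continuous
    fun_prop
  refine of_norm_le (A := ‖B‖ * C * D) (B := C + D) hcont fun x ↦ ?_
  calc ‖B (f x) (g x)‖ ≤ ‖B‖ * ‖f x‖ * ‖g x‖ := B.le_opNorm₂ _ _
    _ ≤ ‖B‖ * (C * exp (C * ‖x‖)) * (D * exp (D * ‖x‖)) := by
        have := (norm_nonneg _).trans (hC x)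
        gcongr
        exacts [hC x, hD x]
    _ = ‖B‖ * C * D * exp ((C + D) * ‖x‖) := by rw [add_mul, exp_add]; ring

theorem smul {c : E → ℝ} (hc : SubexpContinuous c) (hg : SubexpContinuous g) :
    SubexpContinuous fun x ↦ c x • g x :=
  hc.bilin (.lsmul ℝ ℝ) hg

theorem mul {c d : E → ℝ} (hc : SubexpContinuous c) (hd : SubexpContinuous d) :
    SubexpContinuous fun x ↦ c x * d x :=
  hc.smul hd

theorem const_mul (r : ℝ) {c : E → ℝ} (hc : SubexpContinuous c) :
    SubexpContinuous fun x ↦ r * c x :=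
  (of_bounded continuous_const fun _ ↦ le_rfl).mul hc

theorem pow {c : E → ℝ} (hc : SubexpContinuous c) (n : ℕ) :
    SubexpContinuous fun x ↦ c x ^ n := by
  induction n with
  | zero => simpa using of_bounded (g := fun _ : E ↦ (1 : ℝ)) continuous_const fun _ ↦ le_rfl
  | succ n ih => simpa only [pow_succ] using ih.mul hc

theorem clm_apply {L : E → F →L[ℝ] G} (hL : SubexpContinuous L) (hf : SubexpContinuous f) :
    SubexpContinuous fun x ↦ L x (f x) :=
  hL.bilin (.id ℝ _) hf

theorem inner {V : Type*} [NormedAddCommGroup V] [InnerProductSpace ℝ V] {u v : E → V}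
    (hu : SubexpContinuous u) (hv : SubexpContinuous v) :
    SubexpContinuous fun x ↦ ⟪u x, v x⟫_ℝ :=
  hu.bilin (innerSL ℝ) hv

end SubexpContinuous

end SubexponentialGrowth

section ExponentialMoments

variable {E F G : Type*} [NormedAddCommGroup E] [NormedAddCommGroup F] [NormedAddCommGroup G]

/-- Measures all of whose exponential moments are finite, so that they integrate every
`SubexpContinuous` function. -/
class HasExpMoments {E : Type*} [NormedAddCommGroup E] [MeasurableSpace E] (μ : Measure E) :
    Prop where
  integrable_exp_mul_norm (B : ℝ) : Integrable (fun x ↦ exp (B * ‖x‖)) μ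

variable [MeasurableSpace E] [BorelSpace E]

instance [NormedSpace ℝ E] [SecondCountableTopology E] [CompleteSpace E] (μ : Measure E)
    [IsGaussian μ] : HasExpMoments μ where
  integrable_exp_mul_norm B := by
    obtain ⟨C, hC, hint⟩ := IsGaussian.exists_integrable_exp_sq μ
    refine (hint.const_mul (exp (B ^ 2 / (4 * C)))).mono' (by fun_prop) (.of_forall fun x ↦ ?_)
    rw [norm_of_nonneg (exp_pos _).le, ← exp_add, exp_le_exp]
    have : B ^ 2 / (4 * C) + C * ‖x‖ ^ 2 - B * ‖x‖ = (B - 2 * C * ‖x‖) ^ 2 / (4 * C) := by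
      field_simp
      ring
    linarith [show 0 ≤ (B - 2 * C * ‖x‖) ^ 2 / (4 * C) by positivity]

instance [SecondCountableTopology E] [MeasurableSpace F] [BorelSpace F] (μ : Measure E)
    (ν : Measure F) [HasExpMoments μ] [HasExpMoments ν] : HasExpMoments (μ.prod ν) where
  integrable_exp_mul_norm B := by
    have hμ := HasExpMoments.integrable_exp_mul_norm (μ := μ) |B|
    have hν := HasExpMoments.integrable_exp_mul_norm (μ := ν) |B|
    refine (hμ.mul_prod hν).mono' (by fun_prop) (.of_forall fun p ↦ ?_)
    rw [norm_of_nonneg (exp_pos _).le, ← exp_add, exp_le_exp, ← mul_add]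
    have : ‖p‖ ≤ ‖p.1‖ + ‖p.2‖ := max_le_add_of_nonneg (norm_nonneg _) (norm_nonneg _)
    exact mul_le_mul (le_abs_self B) this (norm_nonneg _) (abs_nonneg B)

namespace SubexpContinuous

variable [SecondCountableTopology E] {μ : Measure E} [HasExpMoments μ] {g : E → G}

theorem integrable (hg : SubexpContinuous g) : Integrable g μ := by
  obtain ⟨C, hC⟩ := hg.exists_norm_le
  exact ((HasExpMoments.integrable_exp_mul_norm C).const_mul C).mono'
    hg.continuous.aestronglyMeasurable (.of_forall hC)

theorem memLp_two {c : E → ℝ} (hc : SubexpContinuous c) : MemLp c 2 μ :=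
  (memLp_two_iff_integrable_sq hc.continuous.aestronglyMeasurable).2 (hc.pow 2).integrable

theorem integral_snd [NormedSpace ℝ G] {h : F → E → G}
    (hh : SubexpContinuous fun p : F × E ↦ h p.1 p.2) :
    SubexpContinuous fun t ↦ ∫ x, h t x ∂μ := by
  obtain ⟨C, hC₀, hC⟩ := hh.exists_norm_prod_le
  have hexp : Integrable (fun x ↦ exp (C * ‖x‖)) μ := HasExpMoments.integrable_exp_mul_norm C
  have hmeas (t : F) : AEStronglyMeasurable (h t) μ :=
    (hh.continuous.comp (Continuous.prodMk_right t)).aestronglyMeasurable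
  refine of_norm_le (A := C * ∫ x, exp (C * ‖x‖) ∂μ) (B := C)
    (continuous_iff_continuousAt.2 fun t₀ ↦ ?_) fun t ↦ ?_
  · refine continuousAt_of_dominated (bound := fun x ↦ C * exp (C * (‖t₀‖ + 1)) * exp (C * ‖x‖))
      (.of_forall hmeas) ?_ (hexp.const_mul _) (.of_forall fun x ↦
        (hh.continuous.comp (Continuous.prodMk_left x)).continuousAt)
    filter_upwards [Metric.ball_mem_nhds t₀ one_pos] with t ht
    refine .of_forall fun x ↦ (hC t x).trans ?_
    gcongr
    linarith [norm_le_norm_add_norm_sub' t t₀, mem_ball_iff_norm.1 ht]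
  · calc ‖∫ x, h t x ∂μ‖ ≤ ∫ x, C * exp (C * ‖t‖) * exp (C * ‖x‖) ∂μ :=
          norm_integral_le_of_norm_le (hexp.const_mul _) (.of_forall (hC t))
      _ = C * (∫ x, exp (C * ‖x‖) ∂μ) * exp (C * ‖t‖) := by rw [integral_const_mul]; ring

theorem hasDerivAt_integral [NormedSpace ℝ G] {h h' : ℝ → E → G}
    (hh : SubexpContinuous fun p : ℝ × E ↦ h p.1 p.2)
    (hh' : SubexpContinuous fun p : ℝ × E ↦ h' p.1 p.2)
    (hderiv : ∀ t x, HasDerivAt (h · x) (h' t x) t) (t : ℝ) :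
    HasDerivAt (fun t ↦ ∫ x, h t x ∂μ) (∫ x, h' t x ∂μ) t := by
  obtain ⟨C, hC₀, hC⟩ := hh'.exists_norm_prod_le
  have hslice {k : ℝ → E → G} (hk : SubexpContinuous fun p : ℝ × E ↦ k p.1 p.2) (s : ℝ) :
      SubexpContinuous (k s) :=
    hk.comp (a := ‖s‖) (b := 1) (Continuous.prodMk_right s) fun x ↦ by simp [norm_nonneg]
  refine (hasDerivAt_integral_of_dominated_loc_of_deriv_le (Metric.ball_mem_nhds t one_pos)
    (bound := fun x ↦ C * exp (C * (‖t‖ + 1)) * exp (C * ‖x‖))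
    (.of_forall fun s ↦ (hslice hh s).continuous.aestronglyMeasurable)
    (hslice hh t).integrable (hslice hh' t).continuous.aestronglyMeasurable
    (.of_forall fun x s hs ↦ (hC s x).trans ?_)
    ((HasExpMoments.integrable_exp_mul_norm C).const_mul _)
    (.of_forall fun x s _ ↦ hderiv s x)).2
  gcongr
  linarith [norm_le_norm_add_norm_sub' s t, mem_ball_iff_norm.1 hs]

end SubexpContinuous

end ExponentialMoments

section Rotation

variable {E : Type*} [NormedAddCommGroup E] [NormedSpace ℝ E]

/-- The first coordinate of the pair `p` rotated by the angle `θ`. The second coordinate is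
`rotated (θ + π / 2) p`, which is also the derivative of `θ ↦ rotated θ p`. -/
noncomputable def rotated (θ : ℝ) (p : E × E) : E := cos θ • p.1 + sin θ • p.2

theorem rotated_add_pi_div_two (θ : ℝ) (p : E × E) :
    rotated (θ + π / 2) p = -sin θ • p.1 + cos θ • p.2 := by
  rw [rotated, cos_add_pi_div_two, sin_add_pi_div_two]

@[simp] theorem rotated_zero (p : E × E) : rotated 0 p = p.1 := by simp [rotated]

@[simp] theorem rotated_pi_div_two (p : E × E) : rotated (π / 2) p = p.2 := by simp [rotated]

theorem rotated_rotated (θ φ : ℝ) (p : E × E) :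
    rotated φ (rotated θ p, rotated (θ + π / 2) p) = rotated (θ + φ) p := by
  rw [rotated_add_pi_div_two]
  simp only [rotated, cos_add, sin_add]
  module

theorem hasDerivAt_rotated (p : E × E) (θ : ℝ) :
    HasDerivAt (rotated · p) (rotated (θ + π / 2) p) θ := by
  rw [rotated_add_pi_div_two]
  exact ((hasDerivAt_cos θ).smul_const p.1).add ((hasDerivAt_sin θ).smul_const p.2)

theorem continuous_rotated : Continuous fun q : ℝ × E × E ↦ rotated q.1 q.2 := by
  unfold rotated
  fun_prop

theorem norm_rotated_le (θ : ℝ) (p : E × E) : ‖rotated θ p‖ ≤ 2 * ‖p‖ := by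
  calc ‖rotated θ p‖ ≤ |cos θ| * ‖p.1‖ + |sin θ| * ‖p.2‖ := by
        simpa only [norm_smul, norm_eq_abs] using! norm_add_le (cos θ • p.1) (sin θ • p.2)
    _ ≤ 1 * ‖p‖ + 1 * ‖p‖ := by
        gcongr
        exacts [abs_cos_le_one θ, norm_fst_le p, abs_sin_le_one θ, norm_snd_le p]
    _ = 2 * ‖p‖ := by ring

theorem SubexpContinuous.comp_rotated {F G : Type*} [NormedAddCommGroup F] [NormedAddCommGroup G]
    {g : E → F} (hg : SubexpContinuous g) {φ : G → ℝ} {ψ : G → E × E} (hφ : Continuous φ)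
    (hψ : Continuous ψ) (hψ_le : ∀ q, ‖ψ q‖ ≤ ‖q‖) :
    SubexpContinuous fun q ↦ g (rotated (φ q) (ψ q)) :=
  hg.comp (a := 0) (b := 2) (continuous_rotated.comp (hφ.prodMk hψ)) fun q ↦ by
    linarith [norm_rotated_le (φ q) (ψ q), hψ_le q]

variable [SecondCountableTopology E] [CompleteSpace E] [MeasurableSpace E] [BorelSpace E]
  {μ : Measure E} [IsGaussian μ]

theorem measurePreserving_rotated_prodMk (hμ : ∫ x, x ∂μ = 0) (θ : ℝ) :
    MeasurePreserving (fun p ↦ (rotated θ p, rotated (θ + π / 2) p)) (μ.prod μ) (μ.prod μ) := by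
  have h : (fun p : E × E ↦ (rotated θ p, rotated (θ + π / 2) p)) =
      ContinuousLinearMap.rotation θ := by
    funext p
    rw [rotated_add_pi_div_two, ContinuousLinearMap.rotation_apply, rotated]
  rw [h]
  exact ⟨by fun_prop, IsGaussian.map_rotation_eq_self hμ θ⟩

theorem integral_comp_rotated_prodMk {F : Type*} [NormedAddCommGroup F] [NormedSpace ℝ F]
    (hμ : ∫ x, x ∂μ = 0) {g : E → E → F} (hg : Continuous fun p : E × E ↦ g p.1 p.2) (θ : ℝ) :
    ∫ p, g (rotated θ p) (rotated (θ + π / 2) p) ∂(μ.prod μ) = ∫ p, g p.1 p.2 ∂(μ.prod μ) := by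
  have h := measurePreserving_rotated_prodMk hμ θ
  conv_rhs => rw [← h.map_eq]
  exact (integral_map h.aemeasurable hg.aestronglyMeasurable).symm

theorem integral_comp_rotated {F : Type*} [NormedAddCommGroup F] [NormedSpace ℝ F]
    (hμ : ∫ x, x ∂μ = 0) {g : E → F} (hg : Continuous g) (θ : ℝ) :
    ∫ p, g (rotated θ p) ∂(μ.prod μ) = ∫ x, g x ∂μ := by
  simpa [integral_fun_fst] using integral_comp_rotated_prodMk hμ (g := fun x _ ↦ g x)
    (hg.comp continuous_fst) θ

end Rotation

/-- Differentiable functions which, together with their derivative, are continuous and of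
sub-exponential growth. -/
structure SubexpC1 {E F : Type*} [NormedAddCommGroup E] [NormedSpace ℝ E] [NormedAddCommGroup F]
    [NormedSpace ℝ F] (g : E → F) : Prop where
  differentiable : Differentiable ℝ g
  subexp : SubexpContinuous g
  subexp_fderiv : SubexpContinuous (fderiv ℝ g)

section IntegrationByParts

theorem hasDerivAt_comp_rotated {E F : Type*} [NormedAddCommGroup E] [NormedSpace ℝ E]
    [NormedAddCommGroup F] [NormedSpace ℝ F] {g : E → F} (hg : Differentiable ℝ g) (θ : ℝ)
    (p : E × E) :
    HasDerivAt (fun θ ↦ g (rotated θ p)) (fderiv ℝ g (rotated θ p) (rotated (θ + π / 2) p)) θ :=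
  (hg _).hasFDerivAt.comp_hasDerivAt θ (hasDerivAt_rotated p θ)

variable {E F : Type*} [NormedAddCommGroup E] [NormedSpace ℝ E] [SecondCountableTopology E]
  [CompleteSpace E] [MeasurableSpace E] [BorelSpace E] [NormedAddCommGroup F] [NormedSpace ℝ F]
  [CompleteSpace F]

theorem integral_clm_smul_rotated {μ : Measure E} [IsGaussian μ] (hμ : ∫ x, x ∂μ = 0)
    (L : E →L[ℝ] ℝ) {g : E → F} (hg : SubexpContinuous g) (θ : ℝ) :
    ∫ p, L p.2 • g (rotated θ p) ∂(μ.prod μ) = sin θ • ∫ x, L x • g x ∂μ := by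
  have hL : SubexpContinuous L := .clm L
  have hint₁ : Integrable (fun p : E × E ↦ L p.1 • g p.1) (μ.prod μ) :=
    (hL.smul hg).comp_fst.integrable
  have hint₂ : Integrable (fun p : E × E ↦ L p.2 • g p.1) (μ.prod μ) :=
    (hL.comp_snd.smul hg.comp_fst).integrable
  have hzero : ∫ p, L p.2 • g p.1 ∂(μ.prod μ) = 0 := by
    simp_rw [integral_prod _ hint₂, integral_smul_const, IsGaussian.integral_dual, hμ]
    simp
  have hback (p : E × E) : p.2 = rotated (π / 2 - θ) (rotated θ p, rotated (θ + π / 2) p) := by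
    simp [rotated_rotated]
  calc ∫ p, L p.2 • g (rotated θ p) ∂(μ.prod μ)
      = ∫ p, L (rotated (π / 2 - θ) p) • g p.1 ∂(μ.prod μ) := by
        simp_rw +singlePass [hback]
        have := hg.continuous
        exact integral_comp_rotated_prodMk hμ
          (g := fun u v ↦ L (rotated (π / 2 - θ) (u, v)) • g u) (by unfold rotated; fun_prop) θ
    _ = ∫ p, sin θ • L p.1 • g p.1 + cos θ • L p.2 • g p.1 ∂(μ.prod μ) := by
        congr! 2 with p
        simp only [rotated, cos_pi_div_two_sub, sin_pi_div_two_sub, map_add, map_smul]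
        module
    _ = sin θ • ∫ x, L x • g x ∂μ := by
        refine (integral_add (hint₁.smul (sin θ)) (hint₂.smul (cos θ))).trans ?_
        have hfst := integral_fun_fst (μ := μ) (ν := μ) fun x ↦ L x • g x
        simp only [Pi.smul_apply, integral_smul, hzero, hfst]
        simp

/-- Differentiate the identity `integral_clm_smul_rotated` at `θ = 0`. -/
theorem integral_clm_smul_eq_integral_fderiv {μ : Measure E} [IsGaussian μ]
    (hμ : ∫ x, x ∂μ = 0) (L : E →L[ℝ] ℝ) {g : E → F} (hg : SubexpC1 g) :
    ∫ x, L x • g x ∂μ = ∫ x, fderiv ℝ g x (∫ y, L y • y ∂μ) ∂μ := by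
  have hL : SubexpContinuous L := .clm L
  have hid : SubexpContinuous fun y : E ↦ y := .clm (.id ℝ E)
  have hL₂ : SubexpContinuous fun q : ℝ × E × E ↦ L q.2.2 := hL.comp_snd.comp_snd
  have hderiv := SubexpContinuous.hasDerivAt_integral (μ := μ.prod μ)
    (h := fun θ p ↦ L p.2 • g (rotated θ p))
    (h' := fun θ p ↦ L p.2 • fderiv ℝ g (rotated θ p) (rotated (θ + π / 2) p))
    (hL₂.smul (hg.subexp.comp_rotated (by fun_prop) continuous_snd norm_snd_le))
    (hL₂.smul
      ((hg.subexp_fderiv.comp_rotated (by fun_prop) continuous_snd norm_snd_le).clm_apply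
        (hid.comp_rotated (by fun_prop) continuous_snd norm_snd_le)))
    (fun θ p ↦ (hasDerivAt_comp_rotated hg.differentiable θ p).const_smul _) 0
  simp only [integral_clm_smul_rotated hμ L hg.subexp, zero_add, rotated_zero,
    rotated_pi_div_two] at hderiv
  have hsin := (hasDerivAt_sin 0).smul_const (∫ x, L x • g x ∂μ)
  rw [cos_zero, one_smul] at hsin
  have hint : Integrable (fun p : E × E ↦ L p.2 • fderiv ℝ g p.1 p.2) (μ.prod μ) :=
    (hL.comp_snd.smul (hg.subexp_fderiv.comp_fst.clm_apply hid.comp_snd)).integrable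
  rw [hsin.unique hderiv, integral_prod _ hint]
  congr! 2 with x
  rw [← (fderiv ℝ g x).integral_comp_comm (hL.smul hid).integrable]
  simp

end IntegrationByParts

section StandardGaussian

variable {E : Type*} [NormedAddCommGroup E] [InnerProductSpace ℝ E] [FiniteDimensional ℝ E]
  [MeasurableSpace E] [BorelSpace E]

theorem integral_inner_smul_stdGaussian (v : E) : ∫ y, ⟪v, y⟫_ℝ • y ∂(stdGaussian E) = v := by
  have hid : SubexpContinuous fun y : E ↦ y := .clm (.id ℝ E)
  refine ext_inner_left ℝ fun w ↦ ?_
  calc ⟪w, ∫ y, ⟪v, y⟫_ℝ • y ∂(stdGaussian E)⟫_ℝ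
      = ∫ y, ⟪w, ⟪v, y⟫_ℝ • y⟫_ℝ ∂(stdGaussian E) :=
        (integral_inner ((SubexpContinuous.clm (innerSL ℝ v)).smul hid).integrable w).symm
    _ = covarianceBilin (stdGaussian E) w v := by
        rw [covarianceBilin_apply IsGaussian.memLp_two_id]
        simp [inner_smul_right, integral_id_stdGaussian, mul_comm]
    _ = ⟪w, v⟫_ℝ := by rw [covarianceBilin_stdGaussian]; rfl

theorem integral_inner_smul_eq_integral_fderiv_stdGaussian {F : Type*} [NormedAddCommGroup F]
    [NormedSpace ℝ F] [CompleteSpace F] (v : E) {g : E → F} (hg : SubexpC1 g) :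
    ∫ x, ⟪v, x⟫_ℝ • g x ∂(stdGaussian E) = ∫ x, fderiv ℝ g x v ∂(stdGaussian E) := by
  simpa [integral_inner_smul_stdGaussian] using
    integral_clm_smul_eq_integral_fderiv integral_id_stdGaussian (innerSL ℝ v) hg

theorem integral_mul_eq_integral_deriv_gaussianReal {g : ℝ → ℝ} (hg : SubexpC1 g) :
    ∫ x, x * g x ∂(gaussianReal 0 1) = ∫ x, deriv g x ∂(gaussianReal 0 1) := by
  have hvar : ∫ y, y * y ∂(gaussianReal 0 1) = 1 := by
    have := variance_fun_id_gaussianReal (μ := 0) (v := 1)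
    rw [variance_of_integral_eq_zero (by fun_prop) (by simp)] at this
    simpa [sq] using this
  simpa [hvar] using integral_clm_smul_eq_integral_fderiv (μ := gaussianReal 0 1) (by simp)
    (.id ℝ ℝ) hg

end StandardGaussian

section AngleMeasure

/-- The probability measure `sin θ dθ` on `(0, π / 2]`, the law of the angle in the covariance
representation `covariance_stdGaussian_eq_integral_inner_gradient`. -/
noncomputable def angleMeasure : Measure ℝ :=
  (volume.restrict (Set.Ioc 0 (π / 2))).withDensity fun θ ↦ ENNReal.ofReal (sin θ)

theorem ae_restrict_Ioc_sin_nonneg : ∀ᵐ θ ∂volume.restrict (Set.Ioc 0 (π / 2)), 0 ≤ sin θ := by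
  filter_upwards [ae_restrict_mem measurableSet_Ioc] with θ hθ
  exact sin_nonneg_of_nonneg_of_le_pi hθ.1.le (by linarith [hθ.2, pi_pos])

theorem integral_angleMeasure (h : ℝ → ℝ) :
    ∫ θ, h θ ∂angleMeasure = ∫ θ in 0..π / 2, sin θ * h θ := by
  rw [angleMeasure, integral_withDensity_eq_integral_toReal_smul (by fun_prop) (by simp),
    intervalIntegral.integral_of_le (by positivity)]
  refine integral_congr_ae (ae_restrict_Ioc_sin_nonneg.mono fun θ hθ ↦ ?_)
  simp [ENNReal.toReal_ofReal hθ]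

instance : IsProbabilityMeasure angleMeasure where
  measure_univ := by
    have hint : IntegrableOn sin (Set.Ioc 0 (π / 2)) :=
      (intervalIntegrable_iff_integrableOn_Ioc_of_le (by positivity)).1
        intervalIntegral.intervalIntegrable_sin
    rw [angleMeasure, withDensity_apply _ .univ, Measure.restrict_univ,
      ← ofReal_integral_eq_lintegral_ofReal hint ae_restrict_Ioc_sin_nonneg,
      ← intervalIntegral.integral_of_le (by positivity)]
    simp

instance : HasExpMoments angleMeasure where
  integrable_exp_mul_norm B := by
    have hint : IntegrableOn (fun θ : ℝ ↦ exp (B * ‖θ‖)) (Set.Ioc 0 (π / 2)) :=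
      Continuous.integrableOn_Ioc (by fun_prop)
    refine hint.integrable.mono_measure ?_
    calc angleMeasure ≤ (volume.restrict (Set.Ioc 0 (π / 2))).withDensity 1 :=
          withDensity_mono (.of_forall fun θ ↦ by simpa using sin_le_one θ)
      _ = volume.restrict (Set.Ioc 0 (π / 2)) := withDensity_one

end AngleMeasure

section Covariance

theorem fderiv_comp_smul_add {E F : Type*} [NormedAddCommGroup E] [NormedSpace ℝ E]
    [NormedAddCommGroup F] [NormedSpace ℝ F] {g : E → F} (hg : Differentiable ℝ g) (a : ℝ)
    (c x : E) : fderiv ℝ (fun x ↦ g (a • x + c)) x = a • fderiv ℝ g (a • x + c) := by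
  have h : HasFDerivAt (fun x : E ↦ a • x + c) (a • .id ℝ E) x :=
    ((hasFDerivAt_id x).const_smul a).add_const c
  simpa using! ((hg _).hasFDerivAt.comp x h).fderiv

theorem SubexpC1.comp_smul_add {E F : Type*} [NormedAddCommGroup E] [NormedSpace ℝ E]
    [NormedAddCommGroup F] [NormedSpace ℝ F] {g : E → F} (hg : SubexpC1 g) (a : ℝ) (c : E) :
    SubexpC1 fun x ↦ g (a • x + c) := by
  have hle (x : E) : ‖a • x + c‖ ≤ ‖c‖ + |a| * ‖x‖ := by
    simpa [norm_smul, add_comm] using norm_add_le (a • x) c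
  refine ⟨hg.differentiable.comp (by fun_prop), hg.subexp.comp (by fun_prop) hle, ?_⟩
  simp_rw [funext (fderiv_comp_smul_add hg.differentiable a c)]
  exact (SubexpContinuous.of_bounded continuous_const fun _ ↦ le_rfl).smul
    (hg.subexp_fderiv.comp (by fun_prop) hle)

variable {E : Type*} [NormedAddCommGroup E] [InnerProductSpace ℝ E] [FiniteDimensional ℝ E]
  {f g : E → ℝ}

theorem SubexpC1.gradient (hf : SubexpC1 f) : SubexpContinuous (∇ f) :=
  ⟨(InnerProductSpace.toDual ℝ E).symm.continuous.comp hf.subexp_fderiv.continuous, by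
    simpa [_root_.gradient] using hf.subexp_fderiv.exists_norm_le⟩

variable [MeasurableSpace E] [BorelSpace E]

local notation "γ" => stdGaussian E

/-- Rotating by `-θ` turns the left-hand side into `∫ ⟪∇ f u, v⟫ * g (rotated (-θ) (u, v))`, which
is integrated by parts in `v`. -/
theorem integral_mul_fderiv_rotated (hf : SubexpC1 f) (hg : SubexpC1 g) (θ : ℝ) :
    ∫ p, g p.1 * fderiv ℝ f (rotated θ p) (rotated (θ + π / 2) p)
        ∂(Measure.prod γ γ) =
      -sin θ * ∫ p, ⟪∇ g p.1, ∇ f (rotated θ p)⟫_ℝ ∂(Measure.prod γ γ) := by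
  have hid : SubexpContinuous fun y : E ↦ y := .clm (.id ℝ E)
  have hback (p : E × E) : rotated (-θ) (rotated θ p, rotated (θ + π / 2) p) = p.1 := by
    simp [rotated_rotated]
  have hg' : SubexpContinuous fun p : E × E ↦ g (rotated (-θ) p) :=
    hg.subexp.comp_rotated continuous_const continuous_id fun _ ↦ le_rfl
  have hG' : SubexpContinuous fun p : E × E ↦ ∇ g (rotated (-θ) p) :=
    hg.gradient.comp_rotated continuous_const continuous_id fun _ ↦ le_rfl
  have hf' : SubexpContinuous fun p : E × E ↦ fderiv ℝ f p.1 p.2 :=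
    hf.subexp_fderiv.comp_fst.clm_apply hid.comp_snd
  have hibp (u : E) : ∫ v, g (rotated (-θ) (u, v)) * fderiv ℝ f u v ∂γ =
      ∫ v, -sin θ * ⟪∇ g (rotated (-θ) (u, v)), ∇ f u⟫_ℝ ∂γ := by
    have h_slice (v : E) : rotated (-θ) (u, v) = -sin θ • v + cos θ • u := by
      simp [rotated, add_comm]
    have := integral_inner_smul_eq_integral_fderiv_stdGaussian (∇ f u)
      (hg.comp_smul_add (-sin θ) (cos θ • u))
    rw [funext (fderiv_comp_smul_add hg.differentiable (-sin θ) (cos θ • u))] at this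
    simpa only [← h_slice, inner_gradient_left, smul_eq_mul, mul_comm,
      smul_apply] using this
  calc ∫ p, g p.1 * fderiv ℝ f (rotated θ p) (rotated (θ + π / 2) p) ∂(Measure.prod γ γ)
      = ∫ p, g (rotated (-θ) p) * fderiv ℝ f p.1 p.2 ∂(Measure.prod γ γ) := by
        simpa only [hback] using integral_comp_rotated_prodMk integral_id_stdGaussian
          (g := fun u v ↦ g (rotated (-θ) (u, v)) * fderiv ℝ f u v) (hg'.mul hf').continuous θ
    _ = ∫ p, -sin θ * ⟪∇ g (rotated (-θ) p), ∇ f p.1⟫_ℝ ∂(Measure.prod γ γ) := by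
        rw [integral_prod _ (hg'.mul hf').integrable,
          integral_prod _ ((hG'.inner hf.gradient.comp_fst).const_mul _).integrable]
        exact integral_congr_ae (.of_forall hibp)
    _ = -sin θ * ∫ p, ⟪∇ g p.1, ∇ f (rotated θ p)⟫_ℝ ∂(Measure.prod γ γ) := by
        have hrot := integral_comp_rotated_prodMk integral_id_stdGaussian
          (g := fun u v ↦ ⟪∇ g (rotated (-θ) (u, v)), ∇ f u⟫_ℝ)
          (hG'.inner hf.gradient.comp_fst).continuous θ
        simp only [hback] at hrot
        rw [integral_const_mul, hrot]

theorem subexpContinuous_integral_inner_gradient_rotated (hf : SubexpC1 f) (hg : SubexpC1 g) :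
    SubexpContinuous fun θ ↦ ∫ p, ⟪∇ f p.1, ∇ g (rotated θ p)⟫_ℝ ∂(Measure.prod γ γ) :=
  SubexpContinuous.integral_snd (h := fun θ (p : E × E) ↦ ⟪∇ f p.1, ∇ g (rotated θ p)⟫_ℝ)
    (hf.gradient.comp_fst.comp_snd.inner
      (hg.gradient.comp_rotated continuous_fst continuous_snd norm_snd_le))

theorem covariance_stdGaussian_eq_integral_inner_gradient (hf : SubexpC1 f) (hg : SubexpC1 g) :
    cov[f, g; γ] = ∫ θ, ∫ p, ⟪∇ f p.1, ∇ g (rotated θ p)⟫_ℝ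
      ∂(Measure.prod γ γ) ∂angleMeasure := by
  have hf₁ : SubexpContinuous fun q : ℝ × E × E ↦ f q.2.1 := hf.subexp.comp_fst.comp_snd
  have hid : SubexpContinuous fun y : E ↦ y := .clm (.id ℝ E)
  have hderiv (θ : ℝ) : HasDerivAt (fun θ ↦ ∫ p, f p.1 * g (rotated θ p) ∂(Measure.prod γ γ))
      (-sin θ * ∫ p, ⟪∇ f p.1, ∇ g (rotated θ p)⟫_ℝ ∂(Measure.prod γ γ)) θ := by
    rw [← integral_mul_fderiv_rotated hg hf]
    refine SubexpContinuous.hasDerivAt_integral (hf₁.mul ?_) (hf₁.mul (.clm_apply ?_ ?_))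
      (fun θ p ↦ (hasDerivAt_comp_rotated hg.differentiable θ p).const_mul _) θ
    · exact hg.subexp.comp_rotated continuous_fst continuous_snd norm_snd_le
    · exact hg.subexp_fderiv.comp_rotated continuous_fst continuous_snd norm_snd_le
    · exact hid.comp_rotated (by fun_prop) continuous_snd norm_snd_le
  have hint : ∫ p, f p.1 * g p.1 ∂(Measure.prod γ γ) = ∫ x, f x * g x ∂γ := by
    simpa using integral_fun_fst (μ := γ) (ν := γ) fun x ↦ f x * g x
  have hFTC := intervalIntegral.integral_eq_sub_of_hasDerivAt (a := 0) (b := π / 2)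
    (fun θ _ ↦ hderiv θ)
    ((continuous_sin.neg.mul
      (subexpContinuous_integral_inner_gradient_rotated hf hg).continuous).intervalIntegrable _ _)
  simp only [rotated_zero, rotated_pi_div_two, hint, integral_prod_mul, neg_mul,
    intervalIntegral.integral_neg] at hFTC
  rw [covariance_eq_sub hf.subexp.memLp_two hg.subexp.memLp_two, integral_angleMeasure]
  simp only [Pi.mul_apply]
  linarith

theorem variance_stdGaussian_le_integral_norm_gradient_sq (hf : SubexpC1 f) :
    Var[f; γ] ≤ ∫ x, ‖∇ f x‖ ^ 2 ∂γ := by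
  have hG := hf.gradient
  have hGsq := hf.gradient.norm.pow 2
  have hint₁ : Integrable (fun p : E × E ↦ ‖∇ f p.1‖ ^ 2) (Measure.prod γ γ) :=
    hGsq.comp_fst.integrable
  have hsub (θ : ℝ) : SubexpContinuous fun p : E × E ↦ ∇ f (rotated θ p) :=
    hG.comp_rotated continuous_const continuous_id fun _ ↦ le_rfl
  have hint₂ (θ : ℝ) : Integrable (fun p : E × E ↦ ‖∇ f (rotated θ p)‖ ^ 2) (Measure.prod γ γ) :=
    ((hsub θ).norm.pow 2).integrable
  have hbound (θ : ℝ) :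
      ∫ p, ⟪∇ f p.1, ∇ f (rotated θ p)⟫_ℝ ∂(Measure.prod γ γ) ≤ ∫ x, ‖∇ f x‖ ^ 2 ∂γ :=
    calc ∫ p, ⟪∇ f p.1, ∇ f (rotated θ p)⟫_ℝ ∂(Measure.prod γ γ)
        ≤ ∫ p, (‖∇ f p.1‖ ^ 2 + ‖∇ f (rotated θ p)‖ ^ 2) / 2 ∂(Measure.prod γ γ) := by
          refine integral_mono (hG.comp_fst.inner (hsub θ)).integrable
            ((hint₁.add (hint₂ θ)).div_const 2) fun p ↦ ?_
          have := real_inner_le_norm (∇ f p.1) (∇ f (rotated θ p))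
          have := two_mul_le_add_sq ‖∇ f p.1‖ ‖∇ f (rotated θ p)‖
          dsimp only
          linarith
      _ = ∫ x, ‖∇ f x‖ ^ 2 ∂γ := by
          rw [integral_div, integral_add hint₁ (hint₂ θ),
            integral_comp_rotated integral_id_stdGaussian hGsq.continuous,
            integral_fun_fst (fun x ↦ ‖∇ f x‖ ^ 2)]
          simp
  calc Var[f; γ] = cov[f, f; γ] := (covariance_self hf.subexp.continuous.aemeasurable).symm
    _ = ∫ θ, ∫ p, ⟪∇ f p.1, ∇ f (rotated θ p)⟫_ℝ ∂(Measure.prod γ γ) ∂angleMeasure :=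
        covariance_stdGaussian_eq_integral_inner_gradient hf hf
    _ ≤ ∫ _, ∫ x, ‖∇ f x‖ ^ 2 ∂γ ∂angleMeasure :=
        integral_mono (subexpContinuous_integral_inner_gradient_rotated hf hf).integrable
          (integrable_const _) hbound
    _ = ∫ x, ‖∇ f x‖ ^ 2 ∂γ := by simp

end Covariance

section SteinKernel

local notation "γ₁" => gaussianReal 0 1

theorem integral_abs_gaussianReal : ∫ x, |x| ∂γ₁ = √(2 / π) := by
  have hIoi : ∫ x in Set.Ioi (0 : ℝ), x * exp (-(1 / 2) * x ^ 2) = 1 := by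
    have := integral_rpow_mul_exp_neg_mul_rpow (p := 2) (q := 1) (b := 1 / 2) (by norm_num)
      (by norm_num) (by norm_num)
    norm_num [rpow_neg_one] at this
    simpa only [neg_mul] using this
  have hpdf (x : ℝ) : gaussianPDFReal 0 1 x * |x| =
      (√(2 * π))⁻¹ * (|x| * exp (-(1 / 2) * |x| ^ 2)) := by
    simp only [gaussianPDFReal, NNReal.coe_one, mul_one, sub_zero, sq_abs]
    ring_nf
  rw [integral_gaussianReal_eq_integral_smul one_ne_zero]
  simp only [smul_eq_mul, hpdf, integral_const_mul]
  rw [integral_comp_abs (f := fun x ↦ x * exp (-(1 / 2) * x ^ 2)), hIoi, sqrt_div zero_le_two,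
    sqrt_mul zero_le_two]
  field_simp
  simp

theorem SubexpC1.of_bounded {k : ℝ → ℝ} (hk : ContDiff ℝ 1 k) {A B : ℝ} (hA : ∀ x, |k x| ≤ A)
    (hB : ∀ x, |deriv k x| ≤ B) : SubexpC1 k where
  differentiable := hk.differentiable one_ne_zero
  subexp := .of_bounded hk.continuous hA
  subexp_fderiv := .of_bounded (hk.continuous_fderiv one_ne_zero) fun x ↦ by
    rw [← norm_deriv_eq_norm_fderiv]
    exact hB x

theorem SubexpContinuous.comp_affine {k : ℝ → ℝ} (hk : SubexpContinuous k) (a b : ℝ) :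
    SubexpContinuous fun p : ℝ × ℝ ↦ k (a * p.1 + b * p.2) :=
  hk.comp (a := 0) (b := |a| + |b|) (by fun_prop) fun p ↦ by
    calc ‖a * p.1 + b * p.2‖ ≤ |a| * ‖p.1‖ + |b| * ‖p.2‖ := by
          simpa [abs_mul] using abs_add_le (a * p.1) (b * p.2)
      _ ≤ |a| * ‖p‖ + |b| * ‖p‖ := by gcongr; exacts [norm_fst_le p, norm_snd_le p]
      _ = 0 + (|a| + |b|) * ‖p‖ := by ring

theorem SubexpC1.deriv {k : ℝ → ℝ} (hk : SubexpC1 k) : SubexpContinuous (deriv k) :=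
  hk.subexp_fderiv.clm_apply (.of_bounded continuous_const fun _ ↦ le_rfl)

theorem abs_integral_le_of_forall_abs_le {α : Type*} [MeasurableSpace α] {μ : Measure α}
    [IsProbabilityMeasure μ] {h : α → ℝ} {A : ℝ} (hA : ∀ x, |h x| ≤ A) : |∫ x, h x ∂μ| ≤ A := by
  simpa using norm_integral_le_of_norm_le_const (f := h) (μ := μ) (.of_forall hA)

theorem hasDerivAt_integral_comp_affine_gaussianReal {k : ℝ → ℝ} (hk : SubexpC1 k) (a b x : ℝ) :
    HasDerivAt (fun x ↦ ∫ n, k (a * x + b * n) ∂γ₁) (a * ∫ n, deriv k (a * x + b * n) ∂γ₁) x := by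
  rw [← integral_const_mul]
  refine SubexpContinuous.hasDerivAt_integral (h' := fun x n ↦ a * deriv k (a * x + b * n))
    (hk.subexp.comp_affine a b) ((hk.deriv.comp_affine a b).const_mul a) (fun t n ↦ ?_) x
  have hlin : HasDerivAt (fun x ↦ a * x + b * n) a t := by
    simpa using ((hasDerivAt_id t).const_mul a).add_const (b * n)
  simpa [mul_comm] using! (hk.differentiable _).hasDerivAt.comp t hlin

theorem contDiff_integral_comp_affine_gaussianReal {k : ℝ → ℝ} (hk : SubexpC1 k) (a b : ℝ) :
    ContDiff ℝ 1 fun x ↦ ∫ n, k (a * x + b * n) ∂γ₁ := by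
  have hderiv := hasDerivAt_integral_comp_affine_gaussianReal hk a b
  refine contDiff_one_iff_deriv.2 ⟨fun x ↦ (hderiv x).differentiableAt, ?_⟩
  rw [funext fun x ↦ (hderiv x).deriv]
  exact continuous_const.mul
    (SubexpContinuous.integral_snd (hk.deriv.comp_affine a b)).continuous

theorem integral_mul_comp_affine_gaussianReal {k : ℝ → ℝ} (hk : SubexpC1 k) (c b : ℝ) :
    ∫ n, n * k (c + b * n) ∂γ₁ = b * ∫ n, deriv k (c + b * n) ∂γ₁ := by
  have h := integral_mul_eq_integral_deriv_gaussianReal (hk.comp_smul_add b c)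
  have hderiv (n : ℝ) : _root_.deriv (fun n ↦ k (b • n + c)) n = b * deriv k (b * n + c) := by
    rw [← fderiv_apply_one_eq_deriv, fderiv_comp_smul_add hk.differentiable]
    simp
  simp_rw [hderiv, integral_const_mul, smul_eq_mul] at h
  simpa only [add_comm] using h

theorem abs_mul_integral_deriv_comp_affine_le {k : ℝ → ℝ} (hk : SubexpC1 k)
    (hbound : ∀ x, |k x| ≤ 1) (c b : ℝ) : |b * ∫ n, deriv k (c + b * n) ∂γ₁| ≤ √(2 / π) := by
  have hid : SubexpContinuous fun x : ℝ ↦ x := .clm (.id ℝ ℝ)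
  rw [← integral_mul_comp_affine_gaussianReal hk, ← integral_abs_gaussianReal, ← norm_eq_abs]
  refine norm_integral_le_of_norm_le hid.norm.integrable (.of_forall fun n ↦ ?_)
  simpa [abs_mul] using mul_le_mul_of_nonneg_left (hbound (c + b * n)) (abs_nonneg n)

variable {Ω : Type*} [MeasurableSpace Ω] {P : Measure Ω} {X Y τ : Ω → ℝ}

/-- `τ` is a Stein kernel of the random variable `X`: it turns the Gaussian integration by parts
formula, for which `τ` is the constant `Var X`, into an identity valid for `X`. -/
def IsSteinKernel (τ X : Ω → ℝ) (P : Measure Ω) : Prop :=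
  ∀ φ : ℝ → ℝ, ContDiff ℝ 1 φ → (∃ A, ∀ x, |φ x| ≤ A) → (∃ B, ∀ x, |deriv φ x| ≤ B) →
    ∫ ω, X ω * φ (X ω) ∂P = ∫ ω, τ ω * deriv φ (X ω) ∂P

theorem integrable_comp_lipschitzWith [IsFiniteMeasure P] {u : ℝ → ℝ} {K : ℝ≥0}
    (hu : LipschitzWith K u) (hX : Integrable X P) : Integrable (fun ω ↦ u (X ω)) P := by
  refine ((hX.norm.const_mul K).add (integrable_const ‖u 0‖)).mono'
    (hu.continuous.comp_aestronglyMeasurable hX.1) (.of_forall fun ω ↦ ?_)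
  have h := hu.norm_sub_le (X ω) 0
  rw [sub_zero] at h
  exact (norm_le_norm_sub_add _ (u 0)).trans (add_le_add_left h _)

theorem hasDerivAt_integral_comp_rotated [IsFiniteMeasure P] {u : ℝ → ℝ} (hu : ContDiff ℝ 1 u)
    (hu' : ∀ x, |deriv u x| ≤ 1) (hX : Integrable X P) (hY : Integrable Y P) (s : ℝ) :
    HasDerivAt (fun s ↦ ∫ ω, u (rotated s (X ω, Y ω)) ∂P)
      (∫ ω, deriv u (rotated s (X ω, Y ω)) * rotated (s + π / 2) (X ω, Y ω) ∂P) s := by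
  have hrot (s : ℝ) : Integrable (fun ω ↦ rotated s (X ω, Y ω)) P :=
    (hX.smul (cos s)).add (hY.smul (sin s))
  have hu_lip : LipschitzWith 1 u :=
    lipschitzWith_of_nnnorm_deriv_le (hu.differentiable one_ne_zero) hu'
  refine (hasDerivAt_integral_of_dominated_loc_of_deriv_le Filter.univ_mem
    (F' := fun s ω ↦ deriv u (rotated s (X ω, Y ω)) * rotated (s + π / 2) (X ω, Y ω))
    (bound := fun ω ↦ |X ω| + |Y ω|)
    (.of_forall fun s ↦ hu.continuous.comp_aestronglyMeasurable (hrot s).1)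
    (integrable_comp_lipschitzWith hu_lip (hrot s))
    (((hu.continuous_deriv le_rfl).comp_aestronglyMeasurable (hrot s).1).mul (hrot _).1)
    (.of_forall fun ω s _ ↦ ?_) (hX.abs.add hY.abs) (.of_forall fun ω s _ ↦ ?_)).2
  · calc ‖deriv u (rotated s (X ω, Y ω)) * rotated (s + π / 2) (X ω, Y ω)‖
        ≤ 1 * (|cos (s + π / 2)| * |X ω| + |sin (s + π / 2)| * |Y ω|) := by
          rw [norm_mul]
          gcongr
          · exact hu' _
          · simpa [abs_mul] using! norm_add_le (cos (s + π / 2) • X ω) (sin (s + π / 2) • Y ω)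
      _ ≤ 1 * (1 * |X ω| + 1 * |Y ω|) := by
          gcongr
          exacts [abs_cos_le_one _, abs_sin_le_one _]
      _ = |X ω| + |Y ω| := by ring
  · exact (hu.differentiable one_ne_zero _).hasDerivAt.comp s (hasDerivAt_rotated _ s)

theorem integral_comp_affine_mul_affine_gaussianReal {k : ℝ → ℝ} (hk : SubexpC1 k)
    (a b c d x : ℝ) :
    ∫ n, k (a * x + b * n) * (c * x + d * n) ∂γ₁ =
      c * (x * ∫ n, k (a * x + b * n) ∂γ₁) + d * b * ∫ n, deriv k (a * x + b * n) ∂γ₁ := by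
  have hkx : SubexpContinuous fun n ↦ k (a * x + b * n) := by
    simpa only [smul_eq_mul, add_comm] using (hk.comp_smul_add b (a * x)).subexp
  have hid : SubexpContinuous fun n : ℝ ↦ n := .clm (.id ℝ ℝ)
  calc ∫ n, k (a * x + b * n) * (c * x + d * n) ∂γ₁
      = ∫ n, c * x * k (a * x + b * n) + d * (n * k (a * x + b * n)) ∂γ₁ := by
        congr! 2 with n
        ring
    _ = c * x * ∫ n, k (a * x + b * n) ∂γ₁ + d * ∫ n, n * k (a * x + b * n) ∂γ₁ := by
        rw [integral_add (hkx.const_mul _).integrable ((hid.mul hkx).const_mul d).integrable,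
          integral_const_mul, integral_const_mul]
    _ = _ := by
        rw [integral_mul_comp_affine_gaussianReal hk]
        ring

theorem IsSteinKernel.integral_mul_integral_comp_affine (hτ : IsSteinKernel τ X P) {k : ℝ → ℝ}
    (hk : ContDiff ℝ 1 k) {A B : ℝ} (hA : ∀ x, |k x| ≤ A) (hB : ∀ x, |deriv k x| ≤ B) (a b : ℝ) :
    ∫ ω, X ω * ∫ n, k (a * X ω + b * n) ∂γ₁ ∂P =
      a * ∫ ω, τ ω * ∫ n, deriv k (a * X ω + b * n) ∂γ₁ ∂P := by
  have hk' := SubexpC1.of_bounded hk hA hB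
  have hderiv (x : ℝ) : deriv (fun x ↦ ∫ n, k (a * x + b * n) ∂γ₁) x =
      a * ∫ n, deriv k (a * x + b * n) ∂γ₁ :=
    (hasDerivAt_integral_comp_affine_gaussianReal hk' a b x).deriv
  rw [hτ _ (contDiff_integral_comp_affine_gaussianReal hk' a b)
    ⟨A, fun x ↦ abs_integral_le_of_forall_abs_le fun _ ↦ hA _⟩ ⟨|a| * B, fun x ↦ ?_⟩,
    ← integral_const_mul]
  · simp_rw [hderiv, mul_left_comm]
  · rw [hderiv, abs_mul]
    gcongr
    exact abs_integral_le_of_forall_abs_le fun _ ↦ hB _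

theorem IsSteinKernel.integral_comp_affine_mul_affine (hτ : IsSteinKernel τ X P)
    [IsProbabilityMeasure P] (hX : Integrable X P) (hτ_int : Integrable τ P) {k : ℝ → ℝ}
    (hk : ContDiff ℝ 1 k) {A B : ℝ} (hA : ∀ x, |k x| ≤ A) (hB : ∀ x, |deriv k x| ≤ B)
    (a b c d : ℝ) :
    ∫ p, k (a * X p.1 + b * p.2) * (c * X p.1 + d * p.2) ∂(P.prod γ₁) =
      ∫ ω, (c * a * τ ω + d * b) * ∫ n, deriv k (a * X ω + b * n) ∂γ₁ ∂P := by
  have hk' := SubexpC1.of_bounded hk hA hB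
  set φ : ℝ → ℝ := fun x ↦ ∫ n, k (a * x + b * n) ∂γ₁
  set ψ : ℝ → ℝ := fun x ↦ ∫ n, deriv k (a * x + b * n) ∂γ₁
  have hφX : AEStronglyMeasurable (fun ω ↦ φ (X ω)) P :=
    (contDiff_integral_comp_affine_gaussianReal hk' a b).continuous.comp_aestronglyMeasurable hX.1
  have hψ : Continuous ψ := (SubexpContinuous.integral_snd (hk'.deriv.comp_affine a b)).continuous
  have hψX := hψ.comp_aestronglyMeasurable hX.1
  have hψ_le (x : ℝ) : |ψ x| ≤ B := abs_integral_le_of_forall_abs_le fun _ ↦ hB _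
  have hXφ : Integrable (fun ω ↦ X ω * φ (X ω)) P :=
    hX.mul_bdd hφX (.of_forall fun _ ↦ abs_integral_le_of_forall_abs_le fun _ ↦ hA _)
  have hψ_int : Integrable (fun ω ↦ ψ (X ω)) P := .of_bound hψX B (.of_forall fun _ ↦ hψ_le _)
  have hτψ : Integrable (fun ω ↦ τ ω * ψ (X ω)) P :=
    hτ_int.mul_bdd hψX (.of_forall fun _ ↦ hψ_le _)
  have hlin (a b : ℝ) : Integrable (fun p : Ω × ℝ ↦ a * X p.1 + b * p.2) (P.prod γ₁) :=
    ((hX.comp_fst γ₁).const_mul a).add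
      (((SubexpContinuous.clm (.id ℝ ℝ)).integrable.comp_snd P).const_mul b)
  calc ∫ p, k (a * X p.1 + b * p.2) * (c * X p.1 + d * p.2) ∂(P.prod γ₁)
      = ∫ ω, c * (X ω * φ (X ω)) + d * b * ψ (X ω) ∂P := by
        rw [integral_prod _ ((hlin c d).bdd_mul
          (hk.continuous.comp_aestronglyMeasurable (hlin a b).1) (.of_forall fun _ ↦ hA _))]
        simp_rw [integral_comp_affine_mul_affine_gaussianReal hk', φ, ψ]
    _ = c * (a * ∫ ω, τ ω * ψ (X ω) ∂P) + d * b * ∫ ω, ψ (X ω) ∂P := by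
        rw [integral_add (hXφ.const_mul c) (hψ_int.const_mul _), integral_const_mul,
          integral_const_mul, hτ.integral_mul_integral_comp_affine hk hA hB]
    _ = ∫ ω, (c * a * τ ω + d * b) * ψ (X ω) ∂P := by
        simp_rw [add_mul, mul_assoc (c * a)]
        rw [integral_add (hτψ.const_mul _) (hψ_int.const_mul _), integral_const_mul,
          integral_const_mul, mul_assoc c]

theorem IsSteinKernel.abs_integral_comp_rotated_mul_rotated_le (hτ : IsSteinKernel τ X P)
    [IsProbabilityMeasure P] (hX : Integrable X P) (hτ_int : Integrable τ P) {σ : ℝ} (hσ : 0 < σ)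
    {k : ℝ → ℝ} (hk : ContDiff ℝ 1 k) {B : ℝ} (hk_le : ∀ x, |k x| ≤ 1)
    (hB : ∀ x, |deriv k x| ≤ B) {s : ℝ} (hs : 0 ≤ cos s) :
    |∫ p, k (rotated s (X p.1, σ * p.2)) * rotated (s + π / 2) (X p.1, σ * p.2) ∂(P.prod γ₁)| ≤
      √(2 / π) / σ * (∫ ω, |τ ω - σ ^ 2| ∂P) * cos s := by
  set ψ : ℝ → ℝ := fun x ↦ ∫ n, deriv k (cos s * x + sin s * σ * n) ∂γ₁
  have hψ (x : ℝ) : |sin s * σ * ψ x| ≤ √(2 / π) :=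
    abs_mul_integral_deriv_comp_affine_le (.of_bounded hk hk_le hB) hk_le _ _
  have hint : Integrable (fun ω ↦ |τ ω - σ ^ 2|) P := (hτ_int.sub (integrable_const _)).abs
  calc |∫ p, k (rotated s (X p.1, σ * p.2)) * rotated (s + π / 2) (X p.1, σ * p.2) ∂(P.prod γ₁)|
      = |∫ ω, (-sin s * cos s * τ ω + cos s * σ * (sin s * σ)) * ψ (X ω) ∂P| := by
        rw [← hτ.integral_comp_affine_mul_affine hX hτ_int hk hk_le hB]
        simp only [rotated, smul_eq_mul, cos_add_pi_div_two, sin_add_pi_div_two, mul_assoc]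
    _ ≤ ∫ ω, √(2 / π) / σ * cos s * |τ ω - σ ^ 2| ∂P := by
        rw [← norm_eq_abs]
        refine norm_integral_le_of_norm_le (hint.const_mul _) (.of_forall fun ω ↦ ?_)
        calc |(-sin s * cos s * τ ω + cos s * σ * (sin s * σ)) * ψ (X ω)|
            = |sin s * σ * ψ (X ω)| / σ * cos s * |τ ω - σ ^ 2| := by
              rw [show (-sin s * cos s * τ ω + cos s * σ * (sin s * σ)) * ψ (X ω) =
                  -(sin s * σ * ψ (X ω) / σ * cos s * (τ ω - σ ^ 2)) by field_simp; ring,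
                abs_neg, abs_mul, abs_mul, abs_div, abs_of_pos hσ, abs_of_nonneg hs]
          _ ≤ √(2 / π) / σ * cos s * |τ ω - σ ^ 2| := by gcongr; exact hψ _
    _ = √(2 / π) / σ * (∫ ω, |τ ω - σ ^ 2| ∂P) * cos s := by
        rw [integral_const_mul]
        ring

/-- Interpolate between `X` and `σ N` along the arc `cos s • X + sin s • σ N`. -/
theorem IsSteinKernel.abs_integral_sub_integral_gaussianReal_le_of_contDiff
    (hτ : IsSteinKernel τ X P) [IsProbabilityMeasure P] (hX : Integrable X P)
    (hτ_int : Integrable τ P) {σ : ℝ} (hσ : 0 < σ) {u : ℝ → ℝ} (hu : ContDiff ℝ 2 u)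
    (hu' : ∀ x, |deriv u x| ≤ 1) {B : ℝ} (hB : ∀ x, |deriv (deriv u) x| ≤ B) :
    |∫ ω, u (X ω) ∂P - ∫ n, u (σ * n) ∂γ₁| ≤ √(2 / π) / σ * ∫ ω, |τ ω - σ ^ 2| ∂P := by
  set Φ : ℝ → ℝ := fun s ↦ ∫ p, u (rotated s (X p.1, σ * p.2)) ∂(P.prod γ₁)
  set K : ℝ := √(2 / π) / σ * ∫ ω, |τ ω - σ ^ 2| ∂P
  have hσn : Integrable (fun n ↦ σ * n) γ₁ :=
    (SubexpContinuous.clm (.id ℝ ℝ)).integrable.const_mul σ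
  have hΦ (s : ℝ) := hasDerivAt_integral_comp_rotated (hu.of_le one_le_two) hu' (hX.comp_fst γ₁)
    (hσn.comp_snd P) s
  have hΦ_zero : Φ 0 = ∫ ω, u (X ω) ∂P := by
    simpa [Φ, rotated_zero] using integral_fun_fst (μ := P) (ν := γ₁) fun ω ↦ u (X ω)
  have hΦ_pi : Φ (π / 2) = ∫ n, u (σ * n) ∂γ₁ := by
    simpa [Φ, rotated_pi_div_two] using integral_fun_snd (μ := P) (ν := γ₁) fun n ↦ u (σ * n)
  have hu'_contDiff : ContDiff ℝ 1 (deriv u) := hu.deriv'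
  have hΦ_le := image_norm_le_of_norm_deriv_right_le_deriv_boundary (a := 0) (b := π / 2)
    (f := fun s ↦ Φ 0 - Φ s) (B := fun s ↦ K * sin s)
    (HasDerivAt.continuousOn fun s _ ↦ (hΦ s).const_sub _)
    (fun s _ ↦ ((hΦ s).const_sub _).hasDerivWithinAt) (by simp)
    (fun s ↦ (hasDerivAt_sin s).const_mul K) fun s hs ↦ by
      rw [norm_neg]
      exact hτ.abs_integral_comp_rotated_mul_rotated_le hX hτ_int hσ hu'_contDiff hu' hB
        (cos_nonneg_of_mem_Icc ⟨by linarith [hs.1, pi_pos], hs.2.le⟩)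
  simpa [hΦ_zero, hΦ_pi] using hΦ_le (Set.right_mem_Icc.2 (by positivity))

end SteinKernel

section LipschitzSmoothing

open scoped Convolution

theorem lipschitzWith_convolution_lsmul_right {G F : Type*} [NormedAddCommGroup G]
    [MeasurableSpace G] [BorelSpace G] [NormedAddCommGroup F] [NormedSpace ℝ F] {μ : Measure G}
    [μ.IsAddLeftInvariant] [μ.IsNegInvariant] [IsFiniteMeasureOnCompacts μ]
    [LocallyCompactSpace G] [SecondCountableTopology G] {φ : G → ℝ} {u : G → F} {K : ℝ≥0}
    (hu : LipschitzWith K u) (hφ_supp : HasCompactSupport φ) (hφ : Continuous φ) :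
    LipschitzWith ((∫ t, ‖φ t‖ ∂μ) * K).toNNReal (φ ⋆[.lsmul ℝ ℝ, μ] u) := by
  refine .of_dist_le' fun x y ↦ ?_
  have hconv := hφ_supp.convolutionExists_left (.lsmul ℝ ℝ) hφ
    (hu.continuous.locallyIntegrable (μ := μ))
  have hφ_int : Integrable (fun t ↦ ‖φ t‖ * (K * dist x y)) μ :=
    (hφ.integrable_of_hasCompactSupport hφ_supp).norm.mul_const _
  calc dist ((φ ⋆[.lsmul ℝ ℝ, μ] u) x) ((φ ⋆[.lsmul ℝ ℝ, μ] u) y)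
      = ‖∫ t, φ t • (u (x - t) - u (y - t)) ∂μ‖ := by
        simp_rw [smul_sub, dist_eq_norm, convolution_lsmul]
        exact congrArg _ (integral_sub (hconv x) (hconv y)).symm
    _ ≤ ∫ t, ‖φ t‖ * (K * dist x y) ∂μ :=
        norm_integral_le_of_norm_le hφ_int <| .of_forall fun t ↦ by
          rw [norm_smul, ← dist_eq_norm]
          gcongr
          simpa using hu.dist_le_mul (x - t) (y - t)
    _ = (∫ t, ‖φ t‖ ∂μ) * K * dist x y := by rw [integral_mul_const, mul_assoc]

theorem exists_contDiff_abs_sub_le_of_lipschitzWith {u : ℝ → ℝ} (hu : LipschitzWith 1 u) {ε : ℝ}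
    (hε : 0 < ε) :
    ∃ v : ℝ → ℝ, ContDiff ℝ 2 v ∧ (∀ x, |deriv v x| ≤ 1) ∧ (∃ B, ∀ x, |deriv (deriv v) x| ≤ B) ∧
      ∀ x, |v x - u x| ≤ ε := by
  set b : ContDiffBump (0 : ℝ) := ⟨ε / 2, ε, by positivity, by linarith⟩
  set φ : ℝ → ℝ := b.normed volume
  have hφ : ContDiff ℝ 2 φ := b.contDiff_normed
  have hφ_supp : HasCompactSupport φ := b.hasCompactSupport_normed
  have hu_int : LocallyIntegrable u := hu.continuous.locallyIntegrable
  have hφ_norm : ∫ t, ‖φ t‖ = 1 := by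
    simpa only [norm_of_nonneg (b.nonneg_normed _), φ] using b.integral_normed
  have hlip : LipschitzWith 1 (φ ⋆[.lsmul ℝ ℝ] u) := by
    simpa only [hφ_norm, NNReal.coe_one, one_mul, toNNReal_one] using
      lipschitzWith_convolution_lsmul_right (μ := volume) hu hφ_supp hφ.continuous
  have hderiv : deriv (φ ⋆[.lsmul ℝ ℝ] u) = deriv φ ⋆[.lsmul ℝ ℝ] u := funext fun x ↦
    (hφ_supp.hasDerivAt_convolution_left _ (hφ.of_le one_le_two) hu_int x).deriv
  have hlip_deriv : LipschitzWith (∫ t, ‖deriv φ t‖).toNNReal (deriv (φ ⋆[.lsmul ℝ ℝ] u)) := by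
    simpa only [hderiv, NNReal.coe_one, mul_one] using
      lipschitzWith_convolution_lsmul_right (μ := volume) hu hφ_supp.deriv
        (hφ.continuous_deriv one_le_two)
  refine ⟨φ ⋆[.lsmul ℝ ℝ] u, hφ_supp.contDiff_convolution_left (n := 2) _ hφ hu_int,
    fun x ↦ norm_deriv_le_of_lipschitz hlip,
    ⟨_, fun x ↦ norm_deriv_le_of_lipschitz hlip_deriv⟩,
    fun x ↦ b.dist_normed_convolution_le hu.continuous.aestronglyMeasurable fun y hy ↦ ?_⟩
  simpa using (hu.dist_le_mul y x).trans (by simpa using (Metric.mem_ball.1 hy).le)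

end LipschitzSmoothing

section SteinBound

local notation "γ₁" => gaussianReal 0 1

variable {Ω : Type*} [MeasurableSpace Ω] {P : Measure Ω} [IsProbabilityMeasure P] {X τ : Ω → ℝ}
  {σ : ℝ}

theorem abs_integral_comp_sub_integral_comp_le {u v : ℝ → ℝ} {K L : ℝ≥0} (hu : LipschitzWith K u)
    (hv : LipschitzWith L v) (hX : Integrable X P) {ε : ℝ} (huv : ∀ x, |u x - v x| ≤ ε) :
    |∫ ω, u (X ω) ∂P - ∫ ω, v (X ω) ∂P| ≤ ε := by
  rw [← integral_sub (integrable_comp_lipschitzWith hu hX) (integrable_comp_lipschitzWith hv hX)]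
  exact abs_integral_le_of_forall_abs_le fun _ ↦ huv _

theorem IsSteinKernel.abs_integral_sub_integral_gaussianReal_le (hτ : IsSteinKernel τ X P)
    (hX : Integrable X P) (hτ_int : Integrable τ P) (hσ : 0 < σ) {u : ℝ → ℝ}
    (hu : LipschitzWith 1 u) :
    |∫ ω, u (X ω) ∂P - ∫ n, u (σ * n) ∂γ₁| ≤ √(2 / π) / σ * ∫ ω, |τ ω - σ ^ 2| ∂P := by
  refine le_of_forall_pos_le_add fun ε hε ↦ ?_
  obtain ⟨v, hv, hv', ⟨B, hB⟩, hvu⟩ := exists_contDiff_abs_sub_le_of_lipschitzWith hu (half_pos hε)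
  have hv_lip : LipschitzWith 1 v :=
    lipschitzWith_of_nnnorm_deriv_le (hv.differentiable two_ne_zero) hv'
  have hσn : Integrable (fun n ↦ σ * n) γ₁ :=
    (SubexpContinuous.clm (.id ℝ ℝ)).integrable.const_mul σ
  have hv_le := hτ.abs_integral_sub_integral_gaussianReal_le_of_contDiff hX hτ_int hσ hv hv' hB
  rw [abs_le] at hv_le ⊢
  have hX_close := abs_le.1 (abs_integral_comp_sub_integral_comp_le hv_lip hu hX hvu)
  have hσn_close := abs_le.1 (abs_integral_comp_sub_integral_comp_le hv_lip hu hσn hvu)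
  constructor <;> linarith

theorem IsSteinKernel.dW1_map_gaussianReal_le (hτ : IsSteinKernel τ X P) (hX : Integrable X P)
    (hτ_int : Integrable τ P) (hσ : 0 < σ) :
    dW1 (P.map X) (gaussianReal 0 (σ ^ 2).toNNReal) ≤
      √(2 / π) / σ * ∫ ω, |τ ω - σ ^ 2| ∂P := by
  refine Real.iSup_le (fun ⟨u, hu⟩ ↦ ?_)
    (mul_nonneg (by positivity) (integral_nonneg fun _ ↦ abs_nonneg _))
  have hσ2 : gaussianReal 0 (σ ^ 2).toNNReal = Measure.map (σ * ·) γ₁ := by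
    rw [gaussianReal_map_const_mul, mul_zero, mul_one, toNNReal_of_nonneg (sq_nonneg σ)]
  rw [hσ2, integral_map hX.aemeasurable hu.continuous.aestronglyMeasurable,
    integral_map (by fun_prop) hu.continuous.aestronglyMeasurable]
  exact hτ.abs_integral_sub_integral_gaussianReal_le hX hτ_int hσ hu

end SteinBound

section MeanSquareBounds

variable {Ω : Type*} [MeasurableSpace Ω] {P : Measure Ω}

theorem sq_integral_le_integral_sq [IsProbabilityMeasure P] {X : Ω → ℝ} (hX : MemLp X 2 P) :
    (∫ ω, X ω ∂P) ^ 2 ≤ ∫ ω, X ω ^ 2 ∂P := by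
  have h := variance_nonneg X P
  rw [variance_eq_sub hX] at h
  simpa using h

theorem integral_mul_le_sqrt_integral_sq_mul_sqrt_integral_sq {X Y : Ω → ℝ} (hX : MemLp X 2 P)
    (hY : MemLp Y 2 P) :
    ∫ ω, X ω * Y ω ∂P ≤ √(∫ ω, X ω ^ 2 ∂P) * √(∫ ω, Y ω ^ 2 ∂P) := by
  have hHolder := integral_mul_norm_le_Lp_mul_Lq (f := X) (g := Y) (μ := P) .two_two
    (by simpa using hX) (by simpa using hY)
  simp only [rpow_two, norm_eq_abs, sq_abs, ← sqrt_eq_rpow] at hHolder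
  refine le_trans (integral_mono (hX.integrable_mul hY) (hX.abs.integrable_mul hY.abs) fun ω ↦ ?_)
    hHolder
  exact (le_abs_self _).trans_eq (abs_mul _ _)

variable {E F G : Type*} [NormedAddCommGroup E] [NormedAddCommGroup F] [NormedAddCommGroup G]
  [MeasurableSpace E] [BorelSpace E] [SecondCountableTopology E] [MeasurableSpace F] [BorelSpace F]
  [SecondCountableTopology F] [MeasurableSpace G] [BorelSpace G] [SecondCountableTopology G]
  {μ : Measure E} {ν : Measure F} {ρ : Measure G} [HasExpMoments μ] [HasExpMoments ν]
  [HasExpMoments ρ]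

theorem SubexpContinuous.integral_integral_prod_swap [SFinite μ] [SFinite ν] [SFinite ρ]
    {h : E → F → G → ℝ} (hh : SubexpContinuous fun q : E × F × G ↦ h q.1 q.2.1 q.2.2) :
    ∫ x, ∫ p, h x p.1 p.2 ∂(ν.prod ρ) ∂μ = ∫ y, ∫ p, h p.1 y p.2 ∂(μ.prod ρ) ∂ν := by
  have hassoc : SubexpContinuous fun q : (E × F) × G ↦ h q.1.1 q.1.2 q.2 :=
    hh.comp (φ := fun q : (E × F) × G ↦ (q.1.1, q.1.2, q.2)) (a := 0) (b := 1) (by fun_prop)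
      fun q ↦ by simp [Prod.norm_def, max_assoc]
  have hslice_left (x : E) : SubexpContinuous fun p : F × G ↦ h x p.1 p.2 :=
    hh.comp (φ := fun p : F × G ↦ (x, p)) (a := ‖x‖) (b := 1) (by fun_prop)
      fun p ↦ by simp [Prod.norm_def]
  have hslice_right (y : F) : SubexpContinuous fun p : E × G ↦ h p.1 y p.2 :=
    hh.comp (φ := fun p : E × G ↦ (p.1, y, p.2)) (a := ‖y‖) (b := 1) (by fun_prop)
      fun p ↦ by
        simpa [Prod.norm_def] using
          ⟨le_add_of_nonneg_of_le (norm_nonneg _) (le_max_left _ _),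
            le_add_of_nonneg_of_le (norm_nonneg _) (le_max_right _ _)⟩
  calc ∫ x, ∫ p, h x p.1 p.2 ∂(ν.prod ρ) ∂μ = ∫ x, ∫ y, ∫ z, h x y z ∂ρ ∂ν ∂μ := by
        congr! 2 with x
        exact integral_prod _ (hslice_left x).integrable
    _ = ∫ y, ∫ x, ∫ z, h x y z ∂ρ ∂μ ∂ν :=
        integral_integral_swap hassoc.integral_snd.integrable
    _ = ∫ y, ∫ p, h p.1 y p.2 ∂(μ.prod ρ) ∂ν := by
        congr! 2 with y
        exact (integral_prod _ (hslice_right y).integrable).symm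

theorem SubexpContinuous.variance_integral_le [IsProbabilityMeasure μ] [IsProbabilityMeasure ν]
    {h : E → F → ℝ} (hh : SubexpContinuous fun p : E × F ↦ h p.1 p.2) :
    Var[fun x ↦ ∫ y, h x y ∂ν; μ] ≤ ∫ y, Var[fun x ↦ h x y; μ] ∂ν := by
  have hswap : SubexpContinuous fun p : F × E ↦ h p.2 p.1 :=
    hh.comp (φ := Prod.swap) (a := 0) (b := 1) (by fun_prop)
      fun p ↦ by simp [Prod.norm_def, le_total]
  have hmean : SubexpContinuous fun y ↦ ∫ x, h x y ∂μ := hswap.integral_snd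
  have hcenter : SubexpContinuous fun p : E × F ↦ h p.1 p.2 - ∫ x, h x p.2 ∂μ := by
    simpa [sub_eq_add_neg] using hh.add (hmean.comp_snd.const_mul (-1))
  have hslice {k : E → F → ℝ} (hk : SubexpContinuous fun p : E × F ↦ k p.1 p.2) (x : E) :
      SubexpContinuous (k x) :=
    hk.comp (φ := fun y ↦ (x, y)) (a := ‖x‖) (b := 1) (by fun_prop)
      fun y ↦ by simp [Prod.norm_def]
  calc Var[fun x ↦ ∫ y, h x y ∂ν; μ]
      = ∫ x, (∫ y, h x y ∂ν - ∫ x', ∫ y, h x' y ∂ν ∂μ) ^ 2 ∂μ :=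
        variance_eq_integral hh.integral_snd.continuous.aemeasurable
    _ = ∫ x, (∫ y, (h x y - ∫ x', h x' y ∂μ) ∂ν) ^ 2 ∂μ := by
        rw [integral_integral_swap hh.integrable]
        congr! 3 with x
        exact (integral_sub (hslice hh x).integrable hmean.integrable).symm
    _ ≤ ∫ x, ∫ y, (h x y - ∫ x', h x' y ∂μ) ^ 2 ∂ν ∂μ :=
        integral_mono (hcenter.integral_snd.pow 2).integrable
          (hcenter.pow 2).integral_snd.integrable
          fun x ↦ sq_integral_le_integral_sq
            (hslice (k := fun x y ↦ h x y - ∫ x', h x' y ∂μ) hcenter x).memLp_two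
    _ = ∫ y, ∫ x, (h x y - ∫ x', h x' y ∂μ) ^ 2 ∂μ ∂ν :=
        integral_integral_swap (hcenter.pow 2).integrable
    _ = ∫ y, Var[fun x ↦ h x y; μ] ∂ν := by
        congr! 2 with y
        have : Continuous fun x ↦ h x y := hh.continuous.comp (Continuous.prodMk_left y)
        exact (variance_eq_integral this.aemeasurable).symm

end MeanSquareBounds

section Hessian

variable {E : Type*} [NormedAddCommGroup E] [InnerProductSpace ℝ E] [CompleteSpace E]
  {f : E → ℝ}

theorem inner_fderiv_gradient_comm (hf : Differentiable ℝ f) {x : E}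
    (hf' : DifferentiableAt ℝ (∇ f) x) (u v : E) :
    ⟪fderiv ℝ (∇ f) x u, v⟫_ℝ = ⟪fderiv ℝ (∇ f) x v, u⟫_ℝ := by
  have hL : HasFDerivAt (fun y ↦ innerSL ℝ (∇ f y)) ((innerSL ℝ).comp (fderiv ℝ (∇ f) x)) x :=
    (innerSL ℝ).hasFDerivAt.comp x hf'.hasFDerivAt
  exact second_derivative_symmetric (fun y ↦ (hf y).hasGradientAt.hasFDerivAt) hL u v

theorem gradient_inner_gradient_comp_smul_add (hf : Differentiable ℝ f)
    (hf' : Differentiable ℝ (∇ f)) (a : ℝ) (c x : E) :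
    ∇ (fun x ↦ ⟪∇ f x, ∇ f (a • x + c)⟫_ℝ) x =
      fderiv ℝ (∇ f) x (∇ f (a • x + c)) + a • fderiv ℝ (∇ f) (a • x + c) (∇ f x) := by
  have hcomp : DifferentiableAt ℝ (fun x ↦ ∇ f (a • x + c)) x := (hf'.comp (by fun_prop)) x
  refine ext_inner_right ℝ fun v ↦ ?_
  rw [inner_gradient_left, fderiv_inner_apply ℝ (hf' x) hcomp, fderiv_comp_smul_add hf',
    inner_add_left, inner_fderiv_gradient_comm hf (hf' x), real_inner_smul_left,
    inner_fderiv_gradient_comm hf (hf' _) (∇ f x), smul_apply, real_inner_smul_right,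
    real_inner_comm _ (∇ f x), add_comm]

end Hessian

section Composition

variable {E F G H : Type*} [NormedAddCommGroup E] [NormedSpace ℝ E] [NormedAddCommGroup F]
  [NormedSpace ℝ F] [NormedAddCommGroup G] [NormedSpace ℝ G] [NormedAddCommGroup H]
  [NormedSpace ℝ H]

theorem SubexpC1.bilin (B : F →L[ℝ] G →L[ℝ] H) {u : E → F} {v : E → G} (hu : SubexpC1 u)
    (hv : SubexpC1 v) : SubexpC1 fun x ↦ B (u x) (v x) := by
  have hderiv (x : E) := B.hasFDerivAt_of_bilinear (hu.differentiable x).hasFDerivAt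
    (hv.differentiable x).hasFDerivAt
  refine ⟨fun x ↦ (hderiv x).differentiableAt, hu.subexp.bilin B hv.subexp, ?_⟩
  rw [funext fun x ↦ (hderiv x).fderiv]
  exact (hu.subexp.bilin (B.precompR E) hv.subexp_fderiv).add
    (hu.subexp_fderiv.bilin (B.precompL E) hv.subexp)

theorem SubexpC1.inner {V : Type*} [NormedAddCommGroup V] [InnerProductSpace ℝ V] {u v : E → V}
    (hu : SubexpC1 u) (hv : SubexpC1 v) : SubexpC1 fun x ↦ ⟪u x, v x⟫_ℝ :=
  hu.bilin (innerSL ℝ) hv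

theorem SubexpC1.comp_of_bounded {φ : ℝ → ℝ} (hφ : ContDiff ℝ 1 φ) {A B : ℝ}
    (hA : ∀ x, |φ x| ≤ A) (hB : ∀ x, |_root_.deriv φ x| ≤ B) {f : E → ℝ} (hf : SubexpC1 f) :
    SubexpC1 fun x ↦ φ (f x) := by
  have hderiv (x : E) : HasFDerivAt (fun x ↦ φ (f x)) (_root_.deriv φ (f x) • fderiv ℝ f x) x :=
    ((hφ.differentiable one_ne_zero _).hasDerivAt).comp_hasFDerivAt x
      (hf.differentiable x).hasFDerivAt
  have hf_cont := hf.subexp.continuous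
  refine ⟨fun x ↦ (hderiv x).differentiableAt, .of_bounded (hφ.continuous.comp hf_cont)
    fun x ↦ hA (f x), ?_⟩
  rw [funext fun x ↦ (hderiv x).fderiv]
  exact (SubexpContinuous.of_bounded (hφ.continuous_deriv_one.comp hf_cont)
    fun x ↦ hB (f x)).smul hf.subexp_fderiv

theorem gradient_comp {E : Type*} [NormedAddCommGroup E] [InnerProductSpace ℝ E] [CompleteSpace E]
    {φ : ℝ → ℝ} {f : E → ℝ} {x : E} (hφ : DifferentiableAt ℝ φ (f x))
    (hf : DifferentiableAt ℝ f x) : ∇ (fun x ↦ φ (f x)) x = deriv φ (f x) • ∇ f x := by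
  refine HasGradientAt.gradient (hasGradientAt_iff_hasFDerivAt.2 ?_)
  simpa using! hφ.hasDerivAt.comp_hasFDerivAt x hf.hasGradientAt.hasFDerivAt

end Composition

section OrthonormalExpansion

variable {E F ι : Type*} [NormedAddCommGroup E] [InnerProductSpace ℝ E] [NormedAddCommGroup F]
  [InnerProductSpace ℝ F] [Fintype ι] (b : OrthonormalBasis ι ℝ E)

theorem norm_sq_clm_apply_eq_sum_sum (T : E →L[ℝ] F) (v : E) :
    ‖T v‖ ^ 2 = ∑ l, ∑ m, ⟪T (b l), T (b m)⟫_ℝ * (⟪v, b l⟫_ℝ * ⟪v, b m⟫_ℝ) := by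
  have hTv : T v = ∑ l, ⟪v, b l⟫_ℝ • T (b l) := by
    conv_lhs => rw [← b.sum_repr' v]
    simp [real_inner_comm]
  rw [← real_inner_self_eq_norm_sq, hTv]
  simp_rw [sum_inner, inner_sum, real_inner_smul_left, real_inner_smul_right]
  congr! 2
  ring

theorem integral_norm_sq_clm_apply_le {Ω : Type*} [NormedAddCommGroup Ω] [MeasurableSpace Ω]
    [BorelSpace Ω] [SecondCountableTopology Ω] {μ : Measure Ω} [HasExpMoments μ]
    {T : Ω → E →L[ℝ] F} {v : Ω → E} (hT : SubexpContinuous T) (hv : SubexpContinuous v) :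
    ∫ ω, ‖T ω (v ω)‖ ^ 2 ∂μ ≤ ∑ l, ∑ m, √(∫ ω, ⟪T ω (b l), T ω (b m)⟫_ℝ ^ 2 ∂μ) *
      √(∫ ω, (⟪v ω, b l⟫_ℝ * ⟪v ω, b m⟫_ℝ) ^ 2 ∂μ) := by
  have hconst (l : ι) : SubexpContinuous fun _ : Ω ↦ b l :=
    .of_bounded continuous_const fun _ ↦ le_rfl
  have hTT (l m : ι) : SubexpContinuous fun ω ↦ ⟪T ω (b l), T ω (b m)⟫_ℝ :=
    (hT.clm_apply (hconst l)).inner (hT.clm_apply (hconst m))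
  have hvv (l m : ι) : SubexpContinuous fun ω ↦ ⟪v ω, b l⟫_ℝ * ⟪v ω, b m⟫_ℝ :=
    (hv.inner (hconst l)).mul (hv.inner (hconst m))
  have hint (l m : ι) := ((hTT l m).mul (hvv l m)).integrable (μ := μ)
  simp_rw [norm_sq_clm_apply_eq_sum_sum b]
  rw [integral_finsetSum _ fun l _ ↦ integrable_finsetSum _ fun m _ ↦ hint l m]
  refine Finset.sum_le_sum fun l _ ↦ ?_
  rw [integral_finsetSum _ fun m _ ↦ hint l m]
  exact Finset.sum_le_sum fun m _ ↦
    integral_mul_le_sqrt_integral_sq_mul_sqrt_integral_sq (hTT l m).memLp_two (hvv l m).memLp_two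

end OrthonormalExpansion

section SteinKernelOfGradient

variable {E : Type*} [NormedAddCommGroup E] [InnerProductSpace ℝ E] [FiniteDimensional ℝ E]
  {f g : E → ℝ}

theorem norm_fst_snd_snd_le {E F G : Type*} [NormedAddCommGroup E] [NormedAddCommGroup F]
    [NormedAddCommGroup G] (p : E × F × G) : ‖(p.1, p.2.2)‖ ≤ ‖p‖ := by
  simpa [Prod.norm_def] using (le_total ‖p.2.2‖ ‖p.1‖).imp_right Or.inr

theorem SubexpC1.inner_gradient_rotated (hg : SubexpC1 g) (hf : SubexpC1 f) :
    SubexpContinuous fun p : E × ℝ × E ↦ ⟪∇ g p.1, ∇ f (rotated p.2.1 (p.1, p.2.2))⟫_ℝ :=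
  hg.gradient.comp_fst.inner
    (hf.gradient.comp_rotated (by fun_prop) (by fun_prop) norm_fst_snd_snd_le)

theorem gradient_inner_gradient_rotated (hf : Differentiable ℝ f) (hf' : Differentiable ℝ (∇ f))
    (θ : ℝ) (x y : E) :
    ∇ (fun x ↦ ⟪∇ f x, ∇ f (rotated θ (x, y))⟫_ℝ) x =
      fderiv ℝ (∇ f) x (∇ f (rotated θ (x, y))) +
        cos θ • fderiv ℝ (∇ f) (rotated θ (x, y)) (∇ f x) :=
  gradient_inner_gradient_comp_smul_add hf hf' (cos θ) (sin θ • y) x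

theorem SubexpC1.gradient_inner_gradient_rotated (hf : SubexpC1 f) (hf' : SubexpC1 (∇ f)) :
    SubexpContinuous fun p : E × ℝ × E ↦
      ∇ (fun x ↦ ⟪∇ f x, ∇ f (rotated p.2.1 (x, p.2.2))⟫_ℝ) p.1 := by
  simp_rw [_root_.gradient_inner_gradient_rotated hf.differentiable hf'.differentiable]
  have hcos : SubexpContinuous fun p : E × ℝ × E ↦ cos p.2.1 :=
    .of_bounded (by fun_prop) fun p ↦ abs_cos_le_one _
  refine (hf'.subexp_fderiv.comp_fst.clm_apply ?_).add
    (hcos.smul (.clm_apply ?_ hf.gradient.comp_fst))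
  · exact hf.gradient.comp_rotated (by fun_prop) (by fun_prop) norm_fst_snd_snd_le
  · exact hf'.subexp_fderiv.comp_rotated (by fun_prop) (by fun_prop) norm_fst_snd_snd_le

theorem norm_sq_gradient_inner_gradient_rotated_le (hf : Differentiable ℝ f)
    (hf' : Differentiable ℝ (∇ f)) (θ : ℝ) (p : E × E) :
    ‖∇ (fun x ↦ ⟪∇ f x, ∇ f (rotated θ (x, p.2))⟫_ℝ) p.1‖ ^ 2 ≤
      2 * (‖fderiv ℝ (∇ f) (rotated 0 p) (∇ f (rotated θ p))‖ ^ 2 +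
        ‖fderiv ℝ (∇ f) (rotated θ p) (∇ f (rotated 0 p))‖ ^ 2) := by
  rw [rotated_zero]
  calc ‖∇ (fun x ↦ ⟪∇ f x, ∇ f (rotated θ (x, p.2))⟫_ℝ) p.1‖ ^ 2
      = ‖fderiv ℝ (∇ f) p.1 (∇ f (rotated θ p)) +
          cos θ • fderiv ℝ (∇ f) (rotated θ p) (∇ f p.1)‖ ^ 2 := by
        rw [gradient_inner_gradient_rotated hf hf']
    _ ≤ (‖fderiv ℝ (∇ f) p.1 (∇ f (rotated θ p))‖ +
          ‖fderiv ℝ (∇ f) (rotated θ p) (∇ f p.1)‖) ^ 2 := by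
        gcongr
        refine norm_add_le_of_le le_rfl ?_
        rw [norm_smul]
        exact mul_le_of_le_one_left (norm_nonneg _) (abs_cos_le_one θ)
    _ ≤ _ := add_sq_le

variable [MeasurableSpace E] [BorelSpace E]

local notation "γ" => stdGaussian E

/-- The Stein kernel of `f` under the standard Gaussian measure, read off the representation
`covariance_stdGaussian_eq_integral_inner_gradient`: the first point of the rotated pair is
frozen at `x`. -/
noncomputable def gaussianSteinKernel (f : E → ℝ) (x : E) : ℝ :=
  ∫ q : ℝ × E, ⟪∇ f x, ∇ f (rotated q.1 (x, q.2))⟫_ℝ ∂(angleMeasure.prod γ)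

theorem SubexpC1.gaussianSteinKernel (hf : SubexpC1 f) :
    SubexpContinuous (gaussianSteinKernel f) :=
  (hf.inner_gradient_rotated hf).integral_snd

theorem covariance_stdGaussian_eq_integral_integral_inner_gradient (hg : SubexpC1 g)
    (hf : SubexpC1 f) :
    cov[g, f; γ] = ∫ x, ∫ q : ℝ × E, ⟪∇ g x, ∇ f (rotated q.1 (x, q.2))⟫_ℝ
      ∂(angleMeasure.prod γ) ∂γ := by
  rw [covariance_stdGaussian_eq_integral_inner_gradient hg hf]
  exact (SubexpContinuous.integral_integral_prod_swap
    (h := fun x θ y ↦ ⟪∇ g x, ∇ f (rotated θ (x, y))⟫_ℝ) (hg.inner_gradient_rotated hf)).symm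

theorem integral_gaussianSteinKernel (hf : SubexpC1 f) :
    ∫ x, gaussianSteinKernel f x ∂γ = Var[f; γ] := by
  rw [← covariance_self hf.subexp.continuous.aemeasurable,
    covariance_stdGaussian_eq_integral_integral_inner_gradient hf hf]
  rfl

theorem isSteinKernel_gaussianSteinKernel (hf : SubexpC1 f) (hmean : ∫ x, f x ∂γ = 0) :
    IsSteinKernel (gaussianSteinKernel f) f γ := by
  intro φ hφ ⟨A, hA⟩ ⟨B, hB⟩
  have hφf : SubexpC1 fun x ↦ φ (f x) := hf.comp_of_bounded hφ hA hB
  calc ∫ x, f x * φ (f x) ∂γ = cov[fun x ↦ φ (f x), f; γ] := by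
        rw [covariance_eq_sub hφf.subexp.memLp_two hf.subexp.memLp_two, hmean, mul_zero, sub_zero]
        simp [mul_comm]
    _ = ∫ x, gaussianSteinKernel f x * deriv φ (f x) ∂γ := by
        rw [covariance_stdGaussian_eq_integral_integral_inner_gradient hφf hf]
        congr! 2 with x
        simp_rw [gradient_comp (hφ.differentiable one_ne_zero _) (hf.differentiable x),
          real_inner_smul_left, integral_const_mul]
        exact mul_comm _ _

/-- The sum on the right-hand side of the second-order Poincaré inequality, written in an
orthonormal basis `b`. -/
noncomputable def hessianGradientSum {ι : Type*} [Fintype ι] (b : OrthonormalBasis ι ℝ E)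
    (f : E → ℝ) : ℝ :=
  ∑ l, ∑ m, √(∫ x, ⟪fderiv ℝ (∇ f) x (b l), fderiv ℝ (∇ f) x (b m)⟫_ℝ ^ 2 ∂γ) *
    √(∫ x, (⟪∇ f x, b l⟫_ℝ * ⟪∇ f x, b m⟫_ℝ) ^ 2 ∂γ)

variable {ι : Type*} [Fintype ι] (b : OrthonormalBasis ι ℝ E)

theorem integral_norm_sq_fderiv_gradient_rotated_le (hf : SubexpC1 f) (hf' : SubexpC1 (∇ f))
    (θ θ' : ℝ) :
    ∫ p, ‖fderiv ℝ (∇ f) (rotated θ p) (∇ f (rotated θ' p))‖ ^ 2 ∂(Measure.prod γ γ) ≤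
      hessianGradientSum b f := by
  have hconst (l : ι) : SubexpContinuous fun _ : E ↦ b l :=
    .of_bounded continuous_const fun _ ↦ le_rfl
  have hTT (l m : ι) : Continuous fun x ↦
      ⟪fderiv ℝ (∇ f) x (b l), fderiv ℝ (∇ f) x (b m)⟫_ℝ ^ 2 :=
    (((hf'.subexp_fderiv.clm_apply (hconst l)).inner
      (hf'.subexp_fderiv.clm_apply (hconst m))).pow 2).continuous
  have hvv (l m : ι) : Continuous fun x ↦ (⟪∇ f x, b l⟫_ℝ * ⟪∇ f x, b m⟫_ℝ) ^ 2 :=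
    (((hf.gradient.inner (hconst l)).mul (hf.gradient.inner (hconst m))).pow 2).continuous
  simpa only [hessianGradientSum, id_eq, integral_comp_rotated integral_id_stdGaussian (hTT _ _),
    integral_comp_rotated integral_id_stdGaussian (hvv _ _)] using
    integral_norm_sq_clm_apply_le b (μ := Measure.prod γ γ)
      (hf'.subexp_fderiv.comp_rotated (φ := fun _ ↦ θ) continuous_const continuous_id
        fun _ ↦ le_rfl)
      (hf.gradient.comp_rotated (φ := fun _ ↦ θ') continuous_const continuous_id fun _ ↦ le_rfl)

theorem integral_norm_sq_gradient_inner_gradient_rotated_le (hf : SubexpC1 f)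
    (hf' : SubexpC1 (∇ f)) (θ : ℝ) :
    ∫ p : E × E, ‖∇ (fun x ↦ ⟪∇ f x, ∇ f (rotated θ (x, p.2))⟫_ℝ) p.1‖ ^ 2 ∂(Measure.prod γ γ) ≤
      4 * hessianGradientSum b f := by
  have hint (θ θ' : ℝ) : Integrable
      (fun p : E × E ↦ ‖fderiv ℝ (∇ f) (rotated θ p) (∇ f (rotated θ' p))‖ ^ 2)
      (Measure.prod γ γ) :=
    (((hf'.subexp_fderiv.comp_rotated continuous_const continuous_id fun _ ↦ le_rfl).clm_apply
      (hf.gradient.comp_rotated continuous_const continuous_id fun _ ↦ le_rfl)).norm.pow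
        2).integrable
  calc ∫ p : E × E, ‖∇ (fun x ↦ ⟪∇ f x, ∇ f (rotated θ (x, p.2))⟫_ℝ) p.1‖ ^ 2 ∂(Measure.prod γ γ)
      ≤ ∫ p, 2 * (‖fderiv ℝ (∇ f) (rotated 0 p) (∇ f (rotated θ p))‖ ^ 2 +
          ‖fderiv ℝ (∇ f) (rotated θ p) (∇ f (rotated 0 p))‖ ^ 2) ∂(Measure.prod γ γ) :=
        integral_mono_of_nonneg (.of_forall fun _ ↦ by positivity)
          (((hint 0 θ).add (hint θ 0)).const_mul 2)
          (.of_forall (norm_sq_gradient_inner_gradient_rotated_le hf.differentiable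
            hf'.differentiable θ))
    _ ≤ 2 * (hessianGradientSum b f + hessianGradientSum b f) := by
        rw [integral_const_mul, integral_add (hint 0 θ) (hint θ 0)]
        gcongr <;> exact integral_norm_sq_fderiv_gradient_rotated_le b hf hf' _ _
    _ = 4 * hessianGradientSum b f := by ring

theorem variance_gaussianSteinKernel_le (hf : SubexpC1 f) (hf' : SubexpC1 (∇ f)) :
    Var[gaussianSteinKernel f; γ] ≤ 4 * hessianGradientSum b f := by
  let h (x : E) (q : ℝ × E) : ℝ := ⟪∇ f x, ∇ f (rotated q.1 (x, q.2))⟫_ℝ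
  have hh (q : ℝ × E) : SubexpC1 (h · q) :=
    hf'.inner (hf'.comp_smul_add (cos q.1) (sin q.1 • q.2))
  have hgrad : SubexpContinuous fun p : E × ℝ × E ↦ ‖∇ (h · p.2) p.1‖ ^ 2 :=
    (hf.gradient_inner_gradient_rotated hf').norm.pow 2
  calc Var[gaussianSteinKernel f; γ] ≤ ∫ q, Var[(h · q); γ] ∂(angleMeasure.prod γ) :=
        (hf.inner_gradient_rotated hf).variance_integral_le
    _ ≤ ∫ q, ∫ x, ‖∇ (h · q) x‖ ^ 2 ∂γ ∂(angleMeasure.prod γ) :=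
        integral_mono_of_nonneg (.of_forall fun q ↦ variance_nonneg _ _)
          hgrad.integrable.integral_prod_right
          (.of_forall fun q ↦ variance_stdGaussian_le_integral_norm_gradient_sq (hh q))
    _ = ∫ x, ∫ q, ‖∇ (h · q) x‖ ^ 2 ∂(angleMeasure.prod γ) ∂γ :=
        (integral_integral_swap hgrad.integrable).symm
    _ = ∫ θ, ∫ p, ‖∇ (h · (θ, p.2)) p.1‖ ^ 2 ∂(Measure.prod γ γ) ∂angleMeasure :=
        SubexpContinuous.integral_integral_prod_swap
          (h := fun x θ y ↦ ‖∇ (h · (θ, y)) x‖ ^ 2) hgrad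
    _ ≤ ∫ _, 4 * hessianGradientSum b f ∂angleMeasure :=
        integral_mono_of_nonneg (.of_forall fun _ ↦ by positivity) (integrable_const _)
          (.of_forall (integral_norm_sq_gradient_inner_gradient_rotated_le b hf hf'))
    _ = 4 * hessianGradientSum b f := by simp

theorem integral_abs_gaussianSteinKernel_sub_variance_le (hf : SubexpC1 f)
    (hf' : SubexpC1 (∇ f)) :
    ∫ x, |gaussianSteinKernel f x - Var[f; γ]| ∂γ ≤ √(4 * hessianGradientSum b f) := by
  have hτ := hf.gaussianSteinKernel
  have hdiff : MemLp (fun x ↦ |gaussianSteinKernel f x - Var[f; γ]|) 2 γ :=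
    (hτ.memLp_two.sub (memLp_const _)).abs
  refine le_sqrt_of_sq_le ?_
  calc (∫ x, |gaussianSteinKernel f x - Var[f; γ]| ∂γ) ^ 2
      ≤ ∫ x, |gaussianSteinKernel f x - Var[f; γ]| ^ 2 ∂γ := sq_integral_le_integral_sq hdiff
    _ = Var[gaussianSteinKernel f; γ] := by
        simp_rw [sq_abs, ← integral_gaussianSteinKernel hf]
        exact (variance_eq_integral hτ.continuous.aemeasurable).symm
    _ ≤ 4 * hessianGradientSum b f := variance_gaussianSteinKernel_le b hf hf'

theorem dW1_map_stdGaussian_gaussianReal_le (hf : SubexpC1 f) (hf' : SubexpC1 (∇ f))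
    (hmean : ∫ x, f x ∂γ = 0) (hvar : 0 < Var[f; γ]) :
    dW1 (Measure.map f γ) (gaussianReal 0 (Var[f; γ]).toNNReal) ≤
      √(8 / (Var[f; γ] * π)) * √(hessianGradientSum b f) := by
  have hτ := hf.gaussianSteinKernel
  have hStein := (isSteinKernel_gaussianSteinKernel hf hmean).dW1_map_gaussianReal_le
    hf.subexp.integrable hτ.integrable (sqrt_pos.2 hvar)
  rw [sq_sqrt hvar.le] at hStein
  calc dW1 (Measure.map f γ) (gaussianReal 0 (Var[f; γ]).toNNReal)
      ≤ √(2 / π) / √Var[f; γ] * ∫ x, |gaussianSteinKernel f x - Var[f; γ]| ∂γ := hStein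
    _ ≤ √(2 / π) / √Var[f; γ] * √(4 * hessianGradientSum b f) := by
        gcongr
        exact integral_abs_gaussianSteinKernel_sub_variance_le b hf hf'
    _ = √(8 / (Var[f; γ] * π)) * √(hessianGradientSum b f) := by
        rw [sqrt_mul zero_le_four, ← sqrt_div (by positivity), ← mul_assoc,
          ← sqrt_mul (by positivity)]
        congr 2
        field_simp
        norm_num

end SteinKernelOfGradient

section OrthonormalCriteria

theorem SubexpContinuous.sum {ι G F : Type*} [NormedAddCommGroup G] [NormedAddCommGroup F]
    {s : Finset ι} {u : ι → G → F} (hu : ∀ i, SubexpContinuous (u i)) :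
    SubexpContinuous fun x ↦ ∑ i ∈ s, u i x := by
  classical
  induction s using Finset.induction_on with
  | empty => exact .of_bounded (by simpa using continuous_const) fun x ↦ (by simp : _ ≤ (0 : ℝ))
  | insert i s hi ih => simpa only [Finset.sum_insert hi] using (hu i).add ih

variable {E F G ι : Type*} [NormedAddCommGroup E] [InnerProductSpace ℝ E] [NormedAddCommGroup F]
  [NormedSpace ℝ F] [NormedAddCommGroup G] [Fintype ι] (b : OrthonormalBasis ι ℝ E)

theorem SubexpContinuous.of_inner_basis {u : G → E}
    (hu : ∀ i, SubexpContinuous fun x ↦ ⟪u x, b i⟫_ℝ) : SubexpContinuous u := by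
  have h : u = fun x ↦ ∑ i, ⟪u x, b i⟫_ℝ • b i := by
    funext x
    simpa [real_inner_comm] using (b.sum_repr' (u x)).symm
  rw [h]
  exact .sum fun i ↦ (hu i).smul (.of_bounded continuous_const fun _ ↦ le_rfl)

theorem SubexpContinuous.of_clm_apply_basis {T : G → E →L[ℝ] F}
    (hT : ∀ i, SubexpContinuous fun x ↦ T x (b i)) : SubexpContinuous T := by
  have h : T = fun x ↦ ∑ i, (innerSL ℝ (b i)).smulRight (T x (b i)) := by
    ext x v
    conv_lhs => rw [← b.sum_repr' v]
    simp
  rw [h]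
  exact .sum fun i ↦ SubexpContinuous.bilin
    (ContinuousLinearMap.smulRightL ℝ E F) (f := fun _ ↦ innerSL ℝ (b i))
    (.of_bounded continuous_const fun _ ↦ le_rfl) (hT i)

theorem differentiable_gradient {E : Type*} [NormedAddCommGroup E] [InnerProductSpace ℝ E]
    [CompleteSpace E] {f : E → ℝ} (hf : ContDiff ℝ 2 f) : Differentiable ℝ (∇ f) :=
  (InnerProductSpace.toDual ℝ E).symm.differentiable.comp
    ((hf.fderiv_right (m := 1) le_rfl).differentiable one_ne_zero)

end OrthonormalCriteria

section Coordinates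

variable {d : ℕ} {f : (Fin d → ℝ) → ℝ}

local notation "γ" => stdGaussian (EuclideanSpace ℝ (Fin d))

local notation "e" => EuclideanSpace.basisFun (Fin d) ℝ

theorem measurePreserving_ofLp_stdGaussian :
    MeasurePreserving (MeasurableEquiv.toLp 2 (Fin d → ℝ)).symm γ
      (Measure.pi fun _ ↦ gaussianReal 0 1) :=
  MeasurePreserving.symm _ ⟨by fun_prop, map_pi_eq_stdGaussian⟩

theorem integral_comp_ofLp_stdGaussian (g : (Fin d → ℝ) → ℝ) :
    ∫ x, g x.ofLp ∂γ = ∫ x, g x ∂(Measure.pi fun _ ↦ gaussianReal 0 1) :=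
  measurePreserving_ofLp_stdGaussian.integral_comp' g

theorem map_comp_ofLp_stdGaussian (hf : Measurable f) :
    Measure.map (fun x ↦ f x.ofLp) γ =
      Measure.map f (Measure.pi fun _ : Fin d ↦ gaussianReal 0 1) := by
  rw [← measurePreserving_ofLp_stdGaussian.map_eq, Measure.map_map hf (by fun_prop)]
  rfl

theorem contDiff_comp_ofLp {n : WithTop ℕ∞} (hf : ContDiff ℝ n f) :
    ContDiff ℝ n fun x : EuclideanSpace ℝ (Fin d) ↦ f x.ofLp := by
  fun_prop

theorem contDiff_pderiv1 (hf : ContDiff ℝ 2 f) (l : Fin d) : ContDiff ℝ 1 (pderiv1 f l) :=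
  (hf.fderiv_right le_rfl).clm_apply contDiff_const

theorem continuous_pderiv2 (hf : ContDiff ℝ 2 f) (l m : Fin d) : Continuous (pderiv2 f l m) :=
  ((contDiff_pderiv1 hf m).continuous_fderiv one_ne_zero).clm_apply continuous_const

theorem fderiv_comp_ofLp_basisFun {x : EuclideanSpace ℝ (Fin d)}
    (hf : DifferentiableAt ℝ f x.ofLp) (l : Fin d) :
    fderiv ℝ (fun y : EuclideanSpace ℝ (Fin d) ↦ f y.ofLp) x (e l) = pderiv1 f l x.ofLp := by
  have h : HasFDerivAt (fun y : EuclideanSpace ℝ (Fin d) ↦ f y.ofLp) _ x :=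
    hf.hasFDerivAt.comp x (PiLp.hasFDerivAt_ofLp 2 x)
  rw [h.fderiv, EuclideanSpace.basisFun_apply]
  rfl

theorem inner_fderiv_gradient_comp_ofLp_basisFun (hf : ContDiff ℝ 2 f)
    (x : EuclideanSpace ℝ (Fin d)) (l m : Fin d) :
    ⟪fderiv ℝ (∇ fun y : EuclideanSpace ℝ (Fin d) ↦ f y.ofLp) x (e l), e m⟫_ℝ =
      pderiv2 f l m x.ofLp := by
  have hgrad := differentiable_gradient (contDiff_comp_ofLp hf)
  calc ⟪fderiv ℝ (∇ fun y : EuclideanSpace ℝ (Fin d) ↦ f y.ofLp) x (e l), e m⟫_ℝ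
      = fderiv ℝ (fun y ↦ ⟪∇ (fun z : EuclideanSpace ℝ (Fin d) ↦ f z.ofLp) y, e m⟫_ℝ) x (e l) := by
        rw [fderiv_inner_apply ℝ (hgrad x) (differentiableAt_const _)]
        simp
    _ = fderiv ℝ (fun y : EuclideanSpace ℝ (Fin d) ↦ pderiv1 f m y.ofLp) x (e l) := by
        simp_rw [inner_gradient_left,
          fderiv_comp_ofLp_basisFun (hf.differentiable two_ne_zero _)]
    _ = pderiv2 f l m x.ofLp :=
        fderiv_comp_ofLp_basisFun ((contDiff_pderiv1 hf m).differentiable one_ne_zero _) l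

theorem inner_fderiv_gradient_comp_ofLp (hf : ContDiff ℝ 2 f) (x : EuclideanSpace ℝ (Fin d))
    (l m : Fin d) :
    ⟪fderiv ℝ (∇ fun y : EuclideanSpace ℝ (Fin d) ↦ f y.ofLp) x (e l),
        fderiv ℝ (∇ fun y : EuclideanSpace ℝ (Fin d) ↦ f y.ofLp) x (e m)⟫_ℝ =
      ∑ s, pderiv2 f l s x.ofLp * pderiv2 f m s x.ofLp := by
  rw [← OrthonormalBasis.sum_inner_mul_inner e]
  congr! 2 with s
  · exact inner_fderiv_gradient_comp_ofLp_basisFun hf x l s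
  · rw [real_inner_comm, inner_fderiv_gradient_comp_ofLp_basisFun hf]

theorem hessianGradientSum_comp_ofLp (hf : ContDiff ℝ 2 f) :
    hessianGradientSum e (fun x ↦ f x.ofLp) = ∑ l, ∑ m,
      √(∫ x, (∑ s, pderiv2 f l s x * pderiv2 f m s x) ^ 2
        ∂(Measure.pi fun _ ↦ gaussianReal 0 1)) *
      √(∫ x, (pderiv1 f l x * pderiv1 f m x) ^ 2 ∂(Measure.pi fun _ ↦ gaussianReal 0 1)) := by
  simp_rw [hessianGradientSum, inner_fderiv_gradient_comp_ofLp hf, inner_gradient_left,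
    fderiv_comp_ofLp_basisFun (hf.differentiable two_ne_zero _), ← integral_comp_ofLp_stdGaussian]

theorem subexpContinuous_comp_ofLp {g : (Fin d → ℝ) → ℝ} (hg : Continuous g) {A B : ℝ}
    (h : ∀ x, |g x| ≤ A * exp (B * √(∑ i, x i ^ 2))) :
    SubexpContinuous fun x : EuclideanSpace ℝ (Fin d) ↦ g x.ofLp :=
  .of_norm_le (by fun_prop) fun x ↦ by simpa [EuclideanSpace.norm_eq] using h x.ofLp

theorem subexpC1_comp_ofLp (hf : ContDiff ℝ 1 f)
    (hf₀ : SubexpContinuous fun x : EuclideanSpace ℝ (Fin d) ↦ f x.ofLp)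
    (hf₁ : ∀ l, SubexpContinuous fun x : EuclideanSpace ℝ (Fin d) ↦ pderiv1 f l x.ofLp) :
    SubexpC1 fun x : EuclideanSpace ℝ (Fin d) ↦ f x.ofLp := by
  refine ⟨(contDiff_comp_ofLp hf).differentiable one_ne_zero, hf₀, .of_clm_apply_basis e fun l ↦ ?_⟩
  simpa only [fderiv_comp_ofLp_basisFun (hf.differentiable one_ne_zero _)] using hf₁ l

theorem subexpC1_gradient_comp_ofLp (hf : ContDiff ℝ 2 f)
    (hf₁ : ∀ l, SubexpContinuous fun x : EuclideanSpace ℝ (Fin d) ↦ pderiv1 f l x.ofLp)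
    (hf₂ : ∀ l m, SubexpContinuous fun x : EuclideanSpace ℝ (Fin d) ↦ pderiv2 f l m x.ofLp) :
    SubexpC1 (∇ fun x : EuclideanSpace ℝ (Fin d) ↦ f x.ofLp) := by
  refine ⟨differentiable_gradient (contDiff_comp_ofLp hf), .of_inner_basis e fun l ↦ ?_,
    .of_clm_apply_basis e fun l ↦ .of_inner_basis e fun m ↦ ?_⟩
  · simpa only [inner_gradient_left,
      fderiv_comp_ofLp_basisFun (hf.differentiable two_ne_zero _)] using hf₁ l
  · simpa only [inner_fderiv_gradient_comp_ofLp_basisFun hf] using hf₂ l m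

end Coordinates

theorem second_order_poincare_wasserstein
    (d : ℕ) (hd : 1 ≤ d) (f : (Fin d → ℝ) → ℝ) (hf : ContDiff ℝ 2 f)
    --  and its partial derivatives of order up to two have sub-exponential growth
    (hgrowth : ∃ A B : ℝ, 0 < A ∧ 0 < B ∧ ∀ x : Fin d → ℝ,
      |f x| ≤ A * Real.exp (B * Real.sqrt (∑ i, (x i) ^ 2)) ∧
      (∀ l, |pderiv1 f l x| ≤ A * Real.exp (B * Real.sqrt (∑ i, (x i) ^ 2))) ∧
      (∀ l m, |pderiv2 f l m x| ≤ A * Real.exp (B * Real.sqrt (∑ i, (x i) ^ 2))))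
    (σ2 : ℝ) (hσ2pos : 0 < σ2)
    (hmean : ∫ x, f x ∂(Measure.pi fun _ : Fin d => gaussianReal 0 1) = 0)
    (hvar : ∫ x, (f x) ^ 2 ∂(Measure.pi fun _ : Fin d => gaussianReal 0 1) = σ2) :
    dW1
      (Measure.map f (Measure.pi fun _ : Fin d => gaussianReal 0 1))
      (gaussianReal 0 σ2.toNNReal)
      ≤ (Real.sqrt (8 / (σ2 * π)))
        * Real.sqrt (∑ l, ∑ m,
            ((∫ x, (∑ s, pderiv2 f l s x * pderiv2 f m s x) ^ 2
                ∂(Measure.pi fun _ : Fin d => gaussianReal 0 1)) ^ ((1:ℝ)/2))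
            * ((∫ x, (pderiv1 f l x * pderiv1 f m x) ^ 2
                ∂(Measure.pi fun _ : Fin d => gaussianReal 0 1)) ^ ((1:ℝ)/2))) := by
  obtain ⟨A, B, -, -, hAB⟩ := hgrowth
  have hf_subexp := subexpContinuous_comp_ofLp hf.continuous fun x ↦ (hAB x).1
  have hf₁_subexp (l : Fin d) := subexpContinuous_comp_ofLp (contDiff_pderiv1 hf l).continuous
    fun x ↦ (hAB x).2.1 l
  have hf₂_subexp (l m : Fin d) := subexpContinuous_comp_ofLp
    (continuous_pderiv2 hf l m) fun x ↦ (hAB x).2.2 l m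
  have hf_C1 := subexpC1_comp_ofLp (hf.of_le one_le_two) hf_subexp hf₁_subexp
  have hgrad_C1 := subexpC1_gradient_comp_ofLp hf hf₁_subexp hf₂_subexp
  have hmean' := (integral_comp_ofLp_stdGaussian f).trans hmean
  have hvar' : Var[fun x ↦ f x.ofLp; stdGaussian (EuclideanSpace ℝ (Fin d))] = σ2 := by
    rw [variance_of_integral_eq_zero hf_subexp.continuous.aemeasurable hmean', ← hvar]
    exact integral_comp_ofLp_stdGaussian fun x ↦ f x ^ 2
  simpa only [map_comp_ofLp_stdGaussian hf.continuous.measurable, hvar',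
    hessianGradientSum_comp_ofLp hf, sqrt_eq_rpow] using
    dW1_map_stdGaussian_gaussianReal_le (EuclideanSpace.basisFun (Fin d) ℝ) hf_C1 hgrad_C1 hmean'
      (hvar'.symm ▸ hσ2pos)
end
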